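/- arXiv:1601.07979 — 3 statements merged into one kernel-verified Lean document; each statement's English description precedes it below -/
import Mathlib

section
/- Let (H, α_H) be a finite-dimensional Hom-bialgebra over a field k and q ∈ ℤ. Let X = H*⊗H with structure map α_X = ᾱ⊗α_H, comultiplication Δ_X(f⊗h) = (f_[1]⊗h₁)⊗(f_[2]⊗h₂) and counit ε_X(f⊗h) = f(1_H)ε_H(h), where ᾱ(f) = f∘α_H^{-1} and f_[1]⊗f_[2] is the unique element of H*⊗H* with f_[1](x)f_[2](y) = f(α_H^{-2}(yx)) for all x,y ∈ H. Define ζ : X⊗X → k by ζ((f⊗x)⊗(f'⊗y)) = f(α_H^{q}(y))ε_H(x)f'(1_H), and linear maps ζ^{12}, ζ^{23} : X⊗X⊗X → k by ζ^{12}(a⊗b⊗c) = ζ(a⊗b)ε_X(c) and ζ^{23}(a⊗b⊗c) = ε_X(a)ζ(b⊗c). For linear maps η, η' : X⊗X⊗X → k define (η∗η')(a⊗b⊗c) = Σ η((α_X^{-2}(a))⁽¹⁾ ⊗ (α_X^{-2}(b))⁽¹⁾ ⊗ (α_X^{-2}(c))⁽¹⁾) η'((α_X^{-2}(a))⁽²⁾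 ⊗ (α_X^{-2}(b))⁽²⁾ ⊗ (α_X^{-2}(c))⁽²⁾), where x⁽¹⁾⊗x⁽²⁾ denotes Δ_X(x). Then ζ^{12} ∗ ζ^{23} = ζ^{23} ∗ ζ^{12}. -/
open TensorProduct BigOperators

noncomputable section

variable (k : Type*) [Field k]

section HomDefs

variable {A B C H U X Y Z : Type*}
variable [AddCommGroup A] [Module k A] [AddCommGroup B] [Module k B]
variable [AddCommGroup C] [Module k C] [AddCommGroup H] [Module k H]
variable [AddCommGroup U] [Module k U] [AddCommGroup X] [Module k X]
variable [AddCommGroup Y] [Module k Y] [AddCommGroup Z] [Module k Z]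

/-- A Hom-algebra `(A, α, μ, e)` over `k`. -/
def IsHomAlgebra (α : A ≃ₗ[k] A) (μ : A →ₗ[k] A →ₗ[k] A) (e : A) : Prop :=
  (∀ a b, α (μ a b) = μ (α a) (α b)) ∧
  (∀ a b c, μ (α a) (μ b c) = μ (μ a b) (α c)) ∧
  α e = e ∧ (∀ a, μ e a = α a) ∧ (∀ a, μ a e = α a)

/-- A Hom-coalgebra `(C, α, Δ, ε)` over `k`. -/
def IsHomCoalgebra (α : C ≃ₗ[k] C) (Δ : C →ₗ[k] C ⊗[k] C) (ε : C →ₗ[k] k) : Prop :=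
  (∀ c, Δ (α c) = TensorProduct.map α.toLinearMap α.toLinearMap (Δ c)) ∧
  (∀ c, ε (α c) = ε c) ∧
  (∀ c, TensorProduct.map α.toLinearMap Δ (Δ c)
      = TensorProduct.assoc k C C C (TensorProduct.map Δ α.toLinearMap (Δ c))) ∧
  (∀ c, TensorProduct.lid k C (TensorProduct.map ε (LinearMap.id : C →ₗ[k] C) (Δ c)) = α c) ∧
  (∀ c, TensorProduct.rid k C (TensorProduct.map (LinearMap.id : C →ₗ[k] C) ε (Δ c)) = α c)

/-- A Hom-bialgebra `(H, α, μ, e, Δ, ε)` over `k`. -/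
def IsHomBialgebra (α : H ≃ₗ[k] H) (μ : H →ₗ[k] H →ₗ[k] H) (e : H)
    (Δ : H →ₗ[k] H ⊗[k] H) (ε : H →ₗ[k] k) : Prop :=
  IsHomAlgebra k α μ e ∧ IsHomCoalgebra k α Δ ε ∧
  (∀ a b, Δ (μ a b) = TensorProduct.map (TensorProduct.lift μ) (TensorProduct.lift μ)
      (TensorProduct.tensorTensorTensorComm k H H H H (Δ a ⊗ₜ[k] Δ b))) ∧
  Δ e = e ⊗ₜ[k] e ∧
  (∀ a b, ε (μ a b) = ε a * ε b) ∧
  ε e = 1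

/-- A right `A`-Hom-module `(U, αU, act)`. -/
def IsHomModule (αA : A ≃ₗ[k] A) (μ : A →ₗ[k] A →ₗ[k] A) (e : A)
    (αU : U ≃ₗ[k] U) (act : U →ₗ[k] A →ₗ[k] U) : Prop :=
  (∀ u a, αU (act u a) = act (αU u) (αA a)) ∧
  (∀ u, act u e = αU u) ∧
  (∀ u a b, act (act u a) (αA b) = act (αU u) (μ a b))

/-- A right `H`-Hom-comodule `(U, αU, ρ)`. -/
def IsHomComodule (αH : H ≃ₗ[k] H) (Δ : H →ₗ[k] H ⊗[k] H) (ε : H →ₗ[k] k)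
    (αU : U ≃ₗ[k] U) (ρ : U →ₗ[k] U ⊗[k] H) : Prop :=
  (∀ u, ρ (αU u) = TensorProduct.map αU.toLinearMap αH.toLinearMap (ρ u)) ∧
  (∀ u, TensorProduct.map αU.toLinearMap Δ (ρ u)
      = TensorProduct.assoc k U H H (TensorProduct.map ρ αH.toLinearMap (ρ u))) ∧
  (∀ u, TensorProduct.rid k U (TensorProduct.map (LinearMap.id : U →ₗ[k] U) ε (ρ u)) = αU u)

/-- A Hom-cotwistor `φ : B ⊗ H → H ⊗ B` between Hom-coalgebras `B` and `H`
(conditions (M1)-(M4) together with compatibility with the structure maps). -/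
def IsHomCotwistor (αB : B ≃ₗ[k] B) (ΔB : B →ₗ[k] B ⊗[k] B) (εB : B →ₗ[k] k)
    (αH : H ≃ₗ[k] H) (ΔH : H →ₗ[k] H ⊗[k] H) (εH : H →ₗ[k] k)
    (φ : B ⊗[k] H →ₗ[k] H ⊗[k] B) : Prop :=
  (φ ∘ₗ TensorProduct.map αB.toLinearMap αH.toLinearMap
     = TensorProduct.map αH.toLinearMap αB.toLinearMap ∘ₗ φ) ∧
  -- (M1)
  (TensorProduct.map αH.toLinearMap ΔB ∘ₗ φ
     = (TensorProduct.assoc k H B B).toLinearMap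
       ∘ₗ TensorProduct.map φ (LinearMap.id : B →ₗ[k] B)
       ∘ₗ (TensorProduct.assoc k B H B).symm.toLinearMap
       ∘ₗ TensorProduct.map (LinearMap.id : B →ₗ[k] B) φ
       ∘ₗ (TensorProduct.assoc k B B H).toLinearMap
       ∘ₗ TensorProduct.map ΔB αH.toLinearMap) ∧
  -- (M2)
  (TensorProduct.map ΔH αB.toLinearMap ∘ₗ φ
     = (TensorProduct.assoc k H H B).symm.toLinearMap
       ∘ₗ TensorProduct.map (LinearMap.id : H →ₗ[k] H) φ
       ∘ₗ (TensorProduct.assoc k H B H).toLinearMap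
       ∘ₗ TensorProduct.map φ (LinearMap.id : H →ₗ[k] H)
       ∘ₗ (TensorProduct.assoc k B H H).symm.toLinearMap
       ∘ₗ TensorProduct.map αB.toLinearMap ΔH) ∧
  -- (M3)
  ((TensorProduct.lid k B).toLinearMap
      ∘ₗ TensorProduct.map εH (LinearMap.id : B →ₗ[k] B) ∘ₗ φ
     = (TensorProduct.rid k B).toLinearMap
        ∘ₗ TensorProduct.map (LinearMap.id : B →ₗ[k] B) εH) ∧
  -- (M4)
  ((TensorProduct.rid k H).toLinearMap
      ∘ₗ TensorProduct.map (LinearMap.id : H →ₗ[k] H) εB ∘ₗ φ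
     = (TensorProduct.lid k H).toLinearMap
        ∘ₗ TensorProduct.map εB (LinearMap.id : H →ₗ[k] H))

/-- A monoidal Hom-cotwistor between Hom-bialgebras `B` and `H`:
a Hom-cotwistor additionally satisfying (M5) and (M6). -/
def IsMonoidalHomCotwistor (αB : B ≃ₗ[k] B) (μB : B →ₗ[k] B →ₗ[k] B) (eB : B)
    (ΔB : B →ₗ[k] B ⊗[k] B) (εB : B →ₗ[k] k)
    (αH : H ≃ₗ[k] H) (μH : H →ₗ[k] H →ₗ[k] H) (eH : H)
    (ΔH : H →ₗ[k] H ⊗[k] H) (εH : H →ₗ[k] k)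
    (φ : B ⊗[k] H →ₗ[k] H ⊗[k] B) : Prop :=
  IsHomCotwistor k αB ΔB εB αH ΔH εH φ ∧
  -- (M5)
  (TensorProduct.map (TensorProduct.lift μH) (TensorProduct.lift μB)
      ∘ₗ (TensorProduct.tensorTensorTensorComm k H B H B).toLinearMap
      ∘ₗ TensorProduct.map φ φ
    = φ ∘ₗ TensorProduct.map (TensorProduct.lift μB) (TensorProduct.lift μH)
        ∘ₗ (TensorProduct.tensorTensorTensorComm k B H B H).toLinearMap) ∧
  -- (M6)
  φ (eB ⊗ₜ[k] eH) = eH ⊗ₜ[k] eB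

/-- A Hom-entwining map `Φ : H ⊗ A → A ⊗ H` (conditions (E1)-(E4) together
with compatibility with the structure maps); `(H, A, Φ)` is then a
Hom-entwining structure. -/
def IsHomEntwining (αA : A ≃ₗ[k] A) (μ : A →ₗ[k] A →ₗ[k] A) (e : A)
    (αH : H ≃ₗ[k] H) (Δ : H →ₗ[k] H ⊗[k] H) (ε : H →ₗ[k] k)
    (Φ : H ⊗[k] A →ₗ[k] A ⊗[k] H) : Prop :=
  (TensorProduct.map αA.toLinearMap αH.toLinearMap ∘ₗ Φ
     = Φ ∘ₗ TensorProduct.map αH.toLinearMap αA.toLinearMap) ∧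
  -- (E1)
  (TensorProduct.map (TensorProduct.lift μ) αH.toLinearMap
      ∘ₗ (TensorProduct.assoc k A A H).symm.toLinearMap
      ∘ₗ TensorProduct.map (LinearMap.id : A →ₗ[k] A) Φ
      ∘ₗ (TensorProduct.assoc k A H A).toLinearMap
      ∘ₗ TensorProduct.map Φ (LinearMap.id : A →ₗ[k] A)
    = Φ ∘ₗ TensorProduct.map αH.toLinearMap (TensorProduct.lift μ)
        ∘ₗ (TensorProduct.assoc k H A A).toLinearMap) ∧
  -- (E2)
  (TensorProduct.map αA.toLinearMap Δ ∘ₗ Φ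
     = (TensorProduct.assoc k A H H).toLinearMap
       ∘ₗ TensorProduct.map Φ (LinearMap.id : H →ₗ[k] H)
       ∘ₗ (TensorProduct.assoc k H A H).symm.toLinearMap
       ∘ₗ TensorProduct.map (LinearMap.id : H →ₗ[k] H) Φ
       ∘ₗ (TensorProduct.assoc k H H A).toLinearMap
       ∘ₗ TensorProduct.map Δ αA.toLinearMap) ∧
  -- (E3)
  ((TensorProduct.rid k A).toLinearMap
      ∘ₗ TensorProduct.map (LinearMap.id : A →ₗ[k] A) ε ∘ₗ Φ
     = (TensorProduct.lid k A).toLinearMap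
        ∘ₗ TensorProduct.map ε (LinearMap.id : A →ₗ[k] A)) ∧
  -- (E4)
  (∀ h, Φ (h ⊗ₜ[k] e) = e ⊗ₜ[k] h)

/-- A Hom-monoidal entwining datum between Hom-bialgebras `H` (coalgebra side)
and `A` (algebra side): a Hom-entwining map additionally satisfying (E5), (E6). -/
def IsHomMonoidalEntwining (αA : A ≃ₗ[k] A) (μA : A →ₗ[k] A →ₗ[k] A) (eA : A)
    (ΔA : A →ₗ[k] A ⊗[k] A) (εA : A →ₗ[k] k)
    (αH : H ≃ₗ[k] H) (μH : H →ₗ[k] H →ₗ[k] H) (eH : H)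
    (ΔH : H →ₗ[k] H ⊗[k] H) (εH : H →ₗ[k] k)
    (Φ : H ⊗[k] A →ₗ[k] A ⊗[k] H) : Prop :=
  IsHomEntwining k αA μA eA αH ΔH εH Φ ∧
  -- (E5)
  (TensorProduct.map (LinearMap.id : A ⊗[k] A →ₗ[k] A ⊗[k] A) (TensorProduct.lift μH)
      ∘ₗ (TensorProduct.tensorTensorTensorComm k A H A H).toLinearMap
      ∘ₗ TensorProduct.map Φ Φ
      ∘ₗ (TensorProduct.tensorTensorTensorComm k H H A A).toLinearMap
      ∘ₗ TensorProduct.map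
           (TensorProduct.map (αH.toLinearMap ∘ₗ αH.toLinearMap)
             (αH.toLinearMap ∘ₗ αH.toLinearMap)) ΔA
    = TensorProduct.map ΔA (αH.toLinearMap ∘ₗ αH.toLinearMap)
        ∘ₗ Φ ∘ₗ TensorProduct.map (TensorProduct.lift μH) (LinearMap.id : A →ₗ[k] A)) ∧
  -- (E6)
  (∀ a, TensorProduct.lid k H
      (TensorProduct.map εA (LinearMap.id : H →ₗ[k] H) (Φ (eH ⊗ₜ[k] a))) = εA a • eH)

/-- An `n`-th Hom-entwined module over a Hom-entwining structure `(H, A, Φ)`. -/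
def IsHomEntwinedModule (αA : A ≃ₗ[k] A) (μ : A →ₗ[k] A →ₗ[k] A) (e : A)
    (αH : H ≃ₗ[k] H) (Δ : H →ₗ[k] H ⊗[k] H) (ε : H →ₗ[k] k)
    (Φ : H ⊗[k] A →ₗ[k] A ⊗[k] H) (n : ℤ)
    (αU : U ≃ₗ[k] U) (act : U →ₗ[k] A →ₗ[k] U) (ρ : U →ₗ[k] U ⊗[k] H) : Prop :=
  IsHomModule k αA μ e αU act ∧
  IsHomComodule k αH Δ ε αU ρ ∧
  ∀ u a, ρ (act u a)
    = TensorProduct.map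
        (TensorProduct.lift act ∘ₗ
          TensorProduct.map (LinearMap.id : U →ₗ[k] U) αA.toLinearMap)
        ((αH ^ (-n)).toLinearMap)
        ((TensorProduct.assoc k U A H).symm
          (TensorProduct.map (LinearMap.id : U →ₗ[k] U)
            (Φ ∘ₗ TensorProduct.map ((αH ^ (n + 1)).toLinearMap)
               (LinearMap.id : A →ₗ[k] A))
            (TensorProduct.assoc k U H A (ρ u ⊗ₜ[k] a))))

/-- A Hom-Long dimodule over a Hom-bialgebra `H`. -/
def IsHomLongDimodule (αH : H ≃ₗ[k] H) (μ : H →ₗ[k] H →ₗ[k] H) (e : H)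
    (Δ : H →ₗ[k] H ⊗[k] H) (ε : H →ₗ[k] k)
    (αU : U ≃ₗ[k] U) (act : U →ₗ[k] H →ₗ[k] U) (ρ : U →ₗ[k] U ⊗[k] H) : Prop :=
  IsHomModule k αH μ e αU act ∧
  IsHomComodule k αH Δ ε αU ρ ∧
  ∀ u h, ρ (act u h)
    = TensorProduct.map (TensorProduct.lift act) αH.toLinearMap
        ((TensorProduct.assoc k U H H).symm
          (TensorProduct.map (LinearMap.id : U →ₗ[k] U)
            (TensorProduct.comm k H H).toLinearMap
            (TensorProduct.assoc k U H H (ρ u ⊗ₜ[k] αH h))))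

/-- A right `H`-comodule algebra over a Hom-bialgebra `H`. -/
def IsHomComoduleAlgebra (αH : H ≃ₗ[k] H) (μH : H →ₗ[k] H →ₗ[k] H) (eH : H)
    (ΔH : H →ₗ[k] H ⊗[k] H) (εH : H →ₗ[k] k)
    (αA : A ≃ₗ[k] A) (μA : A →ₗ[k] A →ₗ[k] A) (eA : A)
    (ρA : A →ₗ[k] A ⊗[k] H) : Prop :=
  IsHomAlgebra k αA μA eA ∧
  IsHomComodule k αH ΔH εH αA ρA ∧
  (∀ a b, ρA (μA a b) = TensorProduct.map (TensorProduct.lift μA) (TensorProduct.lift μH)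
      (TensorProduct.tensorTensorTensorComm k A H A H (ρA a ⊗ₜ[k] ρA b))) ∧
  ρA eA = eA ⊗ₜ[k] eH

/-- A right `H`-module coalgebra over a Hom-bialgebra `H`. -/
def IsHomModuleCoalgebra (αH : H ≃ₗ[k] H) (μH : H →ₗ[k] H →ₗ[k] H) (eH : H)
    (ΔH : H →ₗ[k] H ⊗[k] H) (εH : H →ₗ[k] k)
    (αC : C ≃ₗ[k] C) (ΔC : C →ₗ[k] C ⊗[k] C) (εC : C →ₗ[k] k)
    (act : C →ₗ[k] H →ₗ[k] C) : Prop :=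
  IsHomCoalgebra k αC ΔC εC ∧
  IsHomModule k αH μH eH αC act ∧
  (∀ c h, ΔC (act c h) = TensorProduct.map (TensorProduct.lift act) (TensorProduct.lift act)
      (TensorProduct.tensorTensorTensorComm k C C H H (ΔC c ⊗ₜ[k] ΔH h))) ∧
  (∀ c h, εC (act c h) = εC c * εH h)

/-- A Hom-Hopf algebra `(H, α, μ, e, Δ, ε, S)` over `k`. -/
def IsHomHopf (αH : H ≃ₗ[k] H) (μ : H →ₗ[k] H →ₗ[k] H) (e : H)
    (Δ : H →ₗ[k] H ⊗[k] H) (ε : H →ₗ[k] k) (S : H →ₗ[k] H) : Prop :=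
  IsHomBialgebra k αH μ e Δ ε ∧
  (∀ h, S (αH h) = αH (S h)) ∧
  (∀ h, TensorProduct.lift μ
      (TensorProduct.map S (LinearMap.id : H →ₗ[k] H) (Δ h)) = ε h • e) ∧
  (∀ h, TensorProduct.lift μ
      (TensorProduct.map (LinearMap.id : H →ₗ[k] H) S (Δ h)) = ε h • e)

/-- A `p`-th right-right Yetter-Drinfeld module over a Hom-Hopf algebra `H`. -/
def IsYetterDrinfeld (αH : H ≃ₗ[k] H) (μ : H →ₗ[k] H →ₗ[k] H) (e : H)
    (Δ : H →ₗ[k] H ⊗[k] H) (ε : H →ₗ[k] k) (S : H →ₗ[k] H) (p : ℤ)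
    (αU : U ≃ₗ[k] U) (act : U →ₗ[k] H →ₗ[k] U) (ρ : U →ₗ[k] U ⊗[k] H) : Prop :=
  IsHomModule k αH μ e αU act ∧
  IsHomComodule k αH Δ ε αU ρ ∧
  ∀ u h, ρ (act u h)
    = TensorProduct.map
        (TensorProduct.lift act ∘ₗ
          TensorProduct.map (LinearMap.id : U →ₗ[k] U) αH.symm.toLinearMap)
        (TensorProduct.lift μ ∘ₗ
          TensorProduct.map (S ∘ₗ (αH ^ (p - 2)).toLinearMap)
            (TensorProduct.lift μ ∘ₗ
              TensorProduct.map αH.symm.toLinearMap ((αH ^ (p - 4)).toLinearMap)))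
        (TensorProduct.tensorTensorTensorComm k U H H (H ⊗[k] H)
          (TensorProduct.map (LinearMap.id : U ⊗[k] H →ₗ[k] U ⊗[k] H)
            (TensorProduct.leftComm k H H H).toLinearMap
            (TensorProduct.tensorTensorTensorComm k U H H (H ⊗[k] H)
              (ρ u ⊗ₜ[k]
                TensorProduct.map (LinearMap.id : H →ₗ[k] H) Δ (Δ h)))))

/-- The smash coproduct comultiplication on `B ⊗ H` induced by
`φ : B ⊗ H → H ⊗ B`: `Δ(b ⊗ h) = (b₁ ⊗ (h₁)^φ) ⊗ ((b₂)^φ ⊗ h₂)`. -/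
def smashComul (φ : B ⊗[k] H →ₗ[k] H ⊗[k] B) (ΔB : B →ₗ[k] B ⊗[k] B)
    (ΔH : H →ₗ[k] H ⊗[k] H) : B ⊗[k] H →ₗ[k] (B ⊗[k] H) ⊗[k] (B ⊗[k] H) :=
  (TensorProduct.assoc k B H (B ⊗[k] H)).symm.toLinearMap
  ∘ₗ TensorProduct.map (LinearMap.id : B →ₗ[k] B)
       (TensorProduct.assoc k H B H).toLinearMap
  ∘ₗ TensorProduct.map (LinearMap.id : B →ₗ[k] B)
       (TensorProduct.map φ (LinearMap.id : H →ₗ[k] H))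
  ∘ₗ TensorProduct.map (LinearMap.id : B →ₗ[k] B)
       (TensorProduct.assoc k B H H).symm.toLinearMap
  ∘ₗ (TensorProduct.assoc k B B (H ⊗[k] H)).toLinearMap
  ∘ₗ TensorProduct.map ΔB ΔH

/-- The smash coproduct counit on `B ⊗ H`: `ε(b ⊗ h) = εB(b) εH(h)`. -/
def smashCounit (εB : B →ₗ[k] k) (εH : H →ₗ[k] k) : B ⊗[k] H →ₗ[k] k :=
  (TensorProduct.lid k k).toLinearMap ∘ₗ TensorProduct.map εB εH

/-- The componentwise product on `B ⊗ H`: `(a ⊗ h)(b ⊗ g) = ab ⊗ hg`. -/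
def smashMul (μB : B →ₗ[k] B →ₗ[k] B) (μH : H →ₗ[k] H →ₗ[k] H) :
    B ⊗[k] H →ₗ[k] B ⊗[k] H →ₗ[k] B ⊗[k] H :=
  (TensorProduct.mk k (B ⊗[k] H) (B ⊗[k] H)).compr₂
    (TensorProduct.map (TensorProduct.lift μB) (TensorProduct.lift μH)
      ∘ₗ (TensorProduct.tensorTensorTensorComm k B H B H).toLinearMap)

/-- Threefold "componentwise comultiplication" `(C⊗C)⊗C → ((C⊗C)⊗C) ⊗ ((C⊗C)⊗C)`
obtained by applying `Δ2` to each factor and pairing the first and second legs. -/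
def convDelta3 (Δ2 : C →ₗ[k] C ⊗[k] C) :
    (C ⊗[k] C) ⊗[k] C →ₗ[k] ((C ⊗[k] C) ⊗[k] C) ⊗[k] ((C ⊗[k] C) ⊗[k] C) :=
  (TensorProduct.tensorTensorTensorComm k (C ⊗[k] C) (C ⊗[k] C) C C).toLinearMap
  ∘ₗ TensorProduct.map (TensorProduct.tensorTensorTensorComm k C C C C).toLinearMap
       (LinearMap.id : C ⊗[k] C →ₗ[k] C ⊗[k] C)
  ∘ₗ TensorProduct.map (TensorProduct.map Δ2 Δ2) Δ2

/-- The map `ξ_{X,Y}(x ⊗ y) = α_X⁻¹(x)·α_H^m(y₍₁₎) ⊗ α_Y⁻¹(y₍₀₎)` for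
Hom-Long dimodules `X`, `Y`. -/
def longXi (m : ℤ) (αH : H ≃ₗ[k] H) (αX : X ≃ₗ[k] X) (αY : Y ≃ₗ[k] Y)
    (act : X →ₗ[k] H →ₗ[k] X) (ρ : Y →ₗ[k] Y ⊗[k] H) : X ⊗[k] Y →ₗ[k] X ⊗[k] Y :=
  TensorProduct.map
      (TensorProduct.lift act ∘ₗ
        TensorProduct.map (LinearMap.id : X →ₗ[k] X) ((αH ^ m).toLinearMap))
      αY.symm.toLinearMap
    ∘ₗ (TensorProduct.assoc k X H Y).symm.toLinearMap
    ∘ₗ TensorProduct.map (LinearMap.id : X →ₗ[k] X) (TensorProduct.comm k Y H).toLinearMap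
    ∘ₗ TensorProduct.map αX.symm.toLinearMap ρ

/-- The associativity constraint `a_{X,Y,Z}((x⊗y)⊗z) = α_X^{i+1}(x) ⊗ (y ⊗ α_Z^{-j-1}(z))`. -/
def homAssoc (i j : ℤ) (αX : X ≃ₗ[k] X) (αZ : Z ≃ₗ[k] Z) :
    (X ⊗[k] Y) ⊗[k] Z ≃ₗ[k] X ⊗[k] (Y ⊗[k] Z) :=
  (TensorProduct.assoc k X Y Z).trans
    (TensorProduct.congr (αX ^ (i + 1))
      (TensorProduct.congr (LinearEquiv.refl k Y) (αZ ^ (-j - 1))))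

/-- The braiding `τ_{X,Y}(x ⊗ y) = α_Y^{j-i-1}(y₍₀₎) ⊗ α_X^{i-j-1}(x)·α_H^{-p}(y₍₁₎)`
for Yetter-Drinfeld modules. -/
def ydTau (p i j : ℤ) (αH : H ≃ₗ[k] H) (αX : X ≃ₗ[k] X) (αY : Y ≃ₗ[k] Y)
    (act : X →ₗ[k] H →ₗ[k] X) (ρ : Y →ₗ[k] Y ⊗[k] H) : X ⊗[k] Y →ₗ[k] Y ⊗[k] X :=
  TensorProduct.map ((αY ^ (j - i - 1)).toLinearMap)
      (TensorProduct.lift act ∘ₗ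
        TensorProduct.map ((αX ^ (i - j - 1)).toLinearMap) ((αH ^ (-p)).toLinearMap))
    ∘ₗ (TensorProduct.leftComm k X Y H).toLinearMap
    ∘ₗ TensorProduct.map (LinearMap.id : X →ₗ[k] X) ρ

end HomDefs

/-!
Let `X = V ⊗ W` with `V = H*` and `W = H`, write `a₁ ⊗ a₂` for its comultiplication twisted by
`α_X⁻²`, let `η` be the evaluation at `1_H` and `ε` the counit of `H`. The unit and counit axioms
make `η`, `ε`, and hence `ε_X = η ⊗ ε`, cocentral; put `P(a) = a₁ ε_X(a₂) = ε_X(a₁) a₂`. At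
`a ⊗ b ⊗ c` both `ζ¹² ∗ ζ²³` and `ζ²³ ∗ ζ¹²` are convolutions, evaluated at `b`, of the same two
forms `ζ(P(a) ⊗ ·)` and `ζ(· ⊗ P(c))`, in opposite orders. The first is a combination of forms
`η ⊗ φ`, the second of forms `ψ ⊗ ε`, and these commute because `η` and `ε` commute with every
form under convolution.
-/

section LinearForms

variable {R V W : Type*} [CommSemiring R]
variable [AddCommMonoid V] [Module R V] [AddCommMonoid W] [Module R W]

/-- The slice map `v ⊗ w ↦ η v • w` of a linear form `η` on the left factor. -/
def leftSlice (η : V →ₗ[R] R) : V ⊗[R] W →ₗ[R] W :=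
  (TensorProduct.lid R W).toLinearMap ∘ₗ η.rTensor W

/-- The slice map `v ⊗ w ↦ η w • v` of a linear form `η` on the right factor. -/
def rightSlice (η : W →ₗ[R] R) : V ⊗[R] W →ₗ[R] V :=
  (TensorProduct.rid R V).toLinearMap ∘ₗ η.lTensor V

@[simp]
lemma leftSlice_tmul (η : V →ₗ[R] R) (v : V) (w : W) : leftSlice η (v ⊗ₜ[R] w) = η v • w := by
  simp [leftSlice]

@[simp]
lemma rightSlice_tmul (η : W →ₗ[R] R) (v : V) (w : W) : rightSlice η (v ⊗ₜ[R] w) = η w • v := by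
  simp [rightSlice]

lemma leftSlice_comm (η : W →ₗ[R] R) (t : V ⊗[R] W) :
    leftSlice η (TensorProduct.comm R V W t) = rightSlice η t := by
  have h : leftSlice η ∘ₗ (TensorProduct.comm R V W).toLinearMap = rightSlice η := by ext; simp
  exact LinearMap.congr_fun h t

lemma rightSlice_comm (η : V →ₗ[R] R) (t : V ⊗[R] W) :
    rightSlice η (TensorProduct.comm R V W t) = leftSlice η t := by
  have h : rightSlice η ∘ₗ (TensorProduct.comm R V W).toLinearMap = leftSlice η := by ext; simp
  exact LinearMap.congr_fun h t

/-- The convolution product `φ ∗ ψ = (φ ⊗ ψ) ∘ D` on the dual of `V`, for an arbitrary linear map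
`D : V → V ⊗ V`; it is the canonical map `V* ⊗ V* → (V ⊗ V)*` followed by the transpose of
`D`. -/
def formConv (D : V →ₗ[R] V ⊗[R] V) :
    Module.Dual R V →ₗ[R] Module.Dual R V →ₗ[R] Module.Dual R V :=
  TensorProduct.curry (D.dualMap ∘ₗ TensorProduct.dualDistrib R V V)

lemma formConv_apply (D : V →ₗ[R] V ⊗[R] V) (φ ψ : Module.Dual R V) (v : V) :
    formConv D φ ψ v = TensorProduct.dualDistrib R V V (φ ⊗ₜ[R] ψ) (D v) :=
  rfl

lemma formConv_eq_comp_leftSlice (D : V →ₗ[R] V ⊗[R] V) (φ ψ : Module.Dual R V) :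
    formConv D φ ψ = ψ ∘ₗ leftSlice φ ∘ₗ D := by
  have h : TensorProduct.dualDistrib R V V (φ ⊗ₜ[R] ψ) = ψ ∘ₗ leftSlice φ := by ext; simp
  exact congrArg (· ∘ₗ D) h

lemma formConv_eq_comp_rightSlice (D : V →ₗ[R] V ⊗[R] V) (φ ψ : Module.Dual R V) :
    formConv D φ ψ = φ ∘ₗ rightSlice ψ ∘ₗ D := by
  have h : TensorProduct.dualDistrib R V V (φ ⊗ₜ[R] ψ) = φ ∘ₗ rightSlice ψ := by
    ext; simp [mul_comm]
  exact congrArg (· ∘ₗ D) h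

lemma formConv_comm_comp (D : V →ₗ[R] V ⊗[R] V) (φ ψ : Module.Dual R V) :
    formConv ((TensorProduct.comm R V V).toLinearMap ∘ₗ D) φ ψ = formConv D ψ φ := by
  ext v
  simp only [formConv_eq_comp_leftSlice, formConv_eq_comp_rightSlice D, LinearMap.comp_apply,
    LinearEquiv.coe_coe, leftSlice_comm]

/-- A linear form `η` is cocentral for `D` if `η(v₁) v₂ = v₁ η(v₂)`, where `D v = v₁ ⊗ v₂`. -/
def IsCocentralForm (D : V →ₗ[R] V ⊗[R] V) (η : V →ₗ[R] R) : Prop :=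
  leftSlice η ∘ₗ D = rightSlice η ∘ₗ D

namespace IsCocentralForm

variable {D : V →ₗ[R] V ⊗[R] V} {η : V →ₗ[R] R}

lemma leftSlice_apply (hη : IsCocentralForm D η) (v : V) :
    leftSlice η (D v) = rightSlice η (D v) :=
  LinearMap.congr_fun hη v

lemma comp (hη : IsCocentralForm D η) (T : V →ₗ[R] V) : IsCocentralForm (D ∘ₗ T) η :=
  congrArg (· ∘ₗ T) hη

lemma formConv_comm (hη : IsCocentralForm D η) (φ : Module.Dual R V) :
    formConv D η φ = formConv D φ η := by
  rw [formConv_eq_comp_leftSlice, formConv_eq_comp_rightSlice, hη]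

end IsCocentralForm

lemma leftSlice_eval_apply (S : Module.Dual R V ⊗[R] Module.Dual R W) (v : V) (w : W) :
    leftSlice (Module.Dual.eval R V v) S w
      = TensorProduct.dualDistrib R V W S (v ⊗ₜ[R] w) := by
  have h : Module.Dual.eval R W w ∘ₗ leftSlice (Module.Dual.eval R V v)
      = Module.Dual.eval R (V ⊗[R] W) (v ⊗ₜ[R] w) ∘ₗ TensorProduct.dualDistrib R V W := by
    ext; simp
  exact LinearMap.congr_fun h S

lemma rightSlice_eval_apply (S : Module.Dual R V ⊗[R] Module.Dual R W) (v : V) (w : W) :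
    rightSlice (Module.Dual.eval R W w) S v
      = TensorProduct.dualDistrib R V W S (v ⊗ₜ[R] w) := by
  have h : Module.Dual.eval R V v ∘ₗ rightSlice (Module.Dual.eval R W w)
      = Module.Dual.eval R (V ⊗[R] W) (v ⊗ₜ[R] w) ∘ₗ TensorProduct.dualDistrib R V W := by
    ext; simp [mul_comm]
  exact LinearMap.congr_fun h S

lemma isCocentralForm_eval {m : V → V → V} {e : V} (he : ∀ v, m e v = m v e)
    {D : Module.Dual R V →ₗ[R] Module.Dual R V ⊗[R] Module.Dual R V}
    (hD : ∀ f v w, TensorProduct.dualDistrib R V V (D f) (v ⊗ₜ[R] w) = f (m v w)) :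
    IsCocentralForm D (Module.Dual.eval R V e) := by
  ext f v
  simp only [LinearMap.comp_apply, leftSlice_eval_apply, rightSlice_eval_apply, hD, he]

end LinearForms

section HomLongCodouble

variable {k}
variable {V W : Type*} [AddCommGroup V] [Module k V] [AddCommGroup W] [Module k W]

lemma IsHomAlgebra.unit_mul_eq_mul_unit {α : V ≃ₗ[k] V} {μ : V →ₗ[k] V →ₗ[k] V} {e : V}
    (h : IsHomAlgebra k α μ e) (a : V) : μ e a = μ a e := by
  obtain ⟨-, -, -, hleft, hright⟩ := h
  rw [hleft, hright]

lemma IsHomCoalgebra.isCocentralForm_counit {α : V ≃ₗ[k] V} {Δ : V →ₗ[k] V ⊗[k] V}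
    {ε : V →ₗ[k] k} (h : IsHomCoalgebra k α Δ ε) : IsCocentralForm Δ ε := by
  obtain ⟨-, -, -, hleft, hright⟩ := h
  exact LinearMap.ext fun c => (hleft c).trans (hright c).symm

lemma convDelta3_comm_comp (D : V →ₗ[k] V ⊗[k] V) :
    convDelta3 k ((TensorProduct.comm k V V).toLinearMap ∘ₗ D)
      = (TensorProduct.comm k _ _).toLinearMap ∘ₗ convDelta3 k D := by
  have h : (TensorProduct.tensorTensorTensorComm k (V ⊗[k] V) (V ⊗[k] V) V V).toLinearMap
        ∘ₗ TensorProduct.map (TensorProduct.tensorTensorTensorComm k V V V V).toLinearMap .id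
        ∘ₗ TensorProduct.map (TensorProduct.map (TensorProduct.comm k V V).toLinearMap
            (TensorProduct.comm k V V).toLinearMap) (TensorProduct.comm k V V).toLinearMap
      = (TensorProduct.comm k _ _).toLinearMap
        ∘ₗ (TensorProduct.tensorTensorTensorComm k (V ⊗[k] V) (V ⊗[k] V) V V).toLinearMap
        ∘ₗ TensorProduct.map (TensorProduct.tensorTensorTensorComm k V V V V).toLinearMap .id := by
    ext; simp
  have h' := congrArg (· ∘ₗ TensorProduct.map (TensorProduct.map D D) D) h
  simpa only [convDelta3, TensorProduct.map_comp, LinearMap.comp_assoc] using h'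

lemma formConv_convDelta3_apply {η : V →ₗ[k] k} {ζ : V ⊗[k] V →ₗ[k] k}
    {ζ12 ζ23 : (V ⊗[k] V) ⊗[k] V →ₗ[k] k}
    (hζ12 : ∀ a b c, ζ12 ((a ⊗ₜ[k] b) ⊗ₜ[k] c) = ζ (a ⊗ₜ[k] b) * η c)
    (hζ23 : ∀ a b c, ζ23 ((a ⊗ₜ[k] b) ⊗ₜ[k] c) = η a * ζ (b ⊗ₜ[k] c))
    (D : V →ₗ[k] V ⊗[k] V) (a b c : V) :
    formConv (convDelta3 k D) ζ12 ζ23 ((a ⊗ₜ[k] b) ⊗ₜ[k] c)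
      = formConv D (TensorProduct.curry ζ (rightSlice η (D a)))
          ((TensorProduct.curry ζ).flip (leftSlice η (D c))) b := by
  simp only [formConv_apply, convDelta3, LinearMap.comp_apply, TensorProduct.map_tmul,
    LinearEquiv.coe_coe, LinearMap.id_apply]
  generalize D a = s, D b = t, D c = u
  induction s with
  | zero => simp
  | add => simp_all only [TensorProduct.add_tmul, map_add, LinearMap.add_apply]
  | tmul a₁ a₂ =>
    induction u with
    | zero => simp
    | add => simp_all only [TensorProduct.tmul_add, map_add, LinearMap.add_apply]
    | tmul c₁ c₂ =>
      induction t with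
      | zero => simp
      | add => simp_all only [TensorProduct.tmul_add, TensorProduct.add_tmul, map_add]
      | tmul b₁ b₂ =>
        simp only [TensorProduct.tensorTensorTensorComm_tmul, TensorProduct.dualDistrib_apply,
          TensorProduct.curry_apply, LinearMap.flip_apply, LinearMap.smul_apply, map_smul,
          leftSlice_tmul, rightSlice_tmul, smul_eq_mul, hζ12, hζ23]
        ring

lemma formConv_convDelta3_comm {η : V →ₗ[k] k} {ζ : V ⊗[k] V →ₗ[k] k}
    {ζ12 ζ23 : (V ⊗[k] V) ⊗[k] V →ₗ[k] k}
    (hζ12 : ∀ a b c, ζ12 ((a ⊗ₜ[k] b) ⊗ₜ[k] c) = ζ (a ⊗ₜ[k] b) * η c)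
    (hζ23 : ∀ a b c, ζ23 ((a ⊗ₜ[k] b) ⊗ₜ[k] c) = η a * ζ (b ⊗ₜ[k] c))
    {D : V →ₗ[k] V ⊗[k] V} (hη : IsCocentralForm D η)
    (hζ : ∀ s t, formConv D (TensorProduct.curry ζ s) ((TensorProduct.curry ζ).flip t)
      = formConv D ((TensorProduct.curry ζ).flip t) (TensorProduct.curry ζ s)) :
    formConv (convDelta3 k D) ζ12 ζ23 = formConv (convDelta3 k D) ζ23 ζ12 := by
  refine TensorProduct.ext_threefold fun a b c => ?_
  let Dcop := (TensorProduct.comm k V V).toLinearMap ∘ₗ D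
  calc formConv (convDelta3 k D) ζ12 ζ23 ((a ⊗ₜ[k] b) ⊗ₜ[k] c)
      = formConv D (TensorProduct.curry ζ (rightSlice η (D a)))
          ((TensorProduct.curry ζ).flip (leftSlice η (D c))) b :=
        formConv_convDelta3_apply hζ12 hζ23 D a b c
    _ = formConv D ((TensorProduct.curry ζ).flip (leftSlice η (D c)))
          (TensorProduct.curry ζ (rightSlice η (D a))) b := by rw [hζ]
    _ = formConv Dcop (TensorProduct.curry ζ (rightSlice η (Dcop a)))
          ((TensorProduct.curry ζ).flip (leftSlice η (Dcop c))) b := by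
        simp only [Dcop, formConv_comm_comp, LinearMap.comp_apply, LinearEquiv.coe_coe,
          leftSlice_comm, rightSlice_comm, hη.leftSlice_apply]
    _ = formConv (convDelta3 k Dcop) ζ12 ζ23 ((a ⊗ₜ[k] b) ⊗ₜ[k] c) :=
        (formConv_convDelta3_apply hζ12 hζ23 Dcop a b c).symm
    _ = formConv (convDelta3 k D) ζ23 ζ12 ((a ⊗ₜ[k] b) ⊗ₜ[k] c) := by
        rw [convDelta3_comm_comp, formConv_comm_comp]

@[simp]
lemma smashCounit_tmul (φ : V →ₗ[k] k) (ψ : W →ₗ[k] k) (v : V) (w : W) :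
    smashCounit k φ ψ (v ⊗ₜ[k] w) = φ v * ψ w := by
  simp [smashCounit]

lemma smashComul_comm_eq (ΔV : V →ₗ[k] V ⊗[k] V) (ΔW : W →ₗ[k] W ⊗[k] W) :
    smashComul k (TensorProduct.comm k V W).toLinearMap ΔV ΔW
      = (TensorProduct.tensorTensorTensorComm k V V W W).toLinearMap
        ∘ₗ TensorProduct.map ΔV ΔW := by
  simp only [smashComul, ← LinearMap.comp_assoc]
  congr 1
  ext; simp

lemma formConv_smashComul_comm (ΔV : V →ₗ[k] V ⊗[k] V) (ΔW : W →ₗ[k] W ⊗[k] W)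
    (φ ψ : Module.Dual k V) (φ' ψ' : Module.Dual k W) :
    formConv (smashComul k (TensorProduct.comm k V W).toLinearMap ΔV ΔW)
        (smashCounit k φ φ') (smashCounit k ψ ψ')
      = smashCounit k (formConv ΔV φ ψ) (formConv ΔW φ' ψ') := by
  have h : TensorProduct.dualDistrib k _ _ (smashCounit k φ φ' ⊗ₜ[k] smashCounit k ψ ψ')
        ∘ₗ (TensorProduct.tensorTensorTensorComm k V V W W).toLinearMap
      = smashCounit k (TensorProduct.dualDistrib k V V (φ ⊗ₜ[k] ψ))
          (TensorProduct.dualDistrib k W W (φ' ⊗ₜ[k] ψ')) := by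
    ext
    simp [mul_mul_mul_comm]
  rw [smashComul_comm_eq]
  exact TensorProduct.ext' fun v w => LinearMap.congr_fun h (ΔV v ⊗ₜ[k] ΔW w)

lemma IsCocentralForm.smashComul_comm {ΔV : V →ₗ[k] V ⊗[k] V} {ΔW : W →ₗ[k] W ⊗[k] W}
    {η : V →ₗ[k] k} {ε : W →ₗ[k] k} (hη : IsCocentralForm ΔV η) (hε : IsCocentralForm ΔW ε) :
    IsCocentralForm (smashComul k (TensorProduct.comm k V W).toLinearMap ΔV ΔW)
      (smashCounit k η ε) := by
  have hleft : leftSlice (smashCounit k η ε)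
        ∘ₗ (TensorProduct.tensorTensorTensorComm k V V W W).toLinearMap
      = TensorProduct.map (leftSlice η) (leftSlice ε) := by
    ext
    simp [← TensorProduct.smul_tmul_smul]
  have hright : rightSlice (smashCounit k η ε)
        ∘ₗ (TensorProduct.tensorTensorTensorComm k V V W W).toLinearMap
      = TensorProduct.map (rightSlice η) (rightSlice ε) := by
    ext
    simp [← TensorProduct.smul_tmul_smul]
  rw [IsCocentralForm, smashComul_comm_eq, ← LinearMap.comp_assoc, ← LinearMap.comp_assoc,
    hleft, hright, ← TensorProduct.map_comp, ← TensorProduct.map_comp, hη, hε]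

lemma formConv_smashComul_curry_comm {p : V →ₗ[k] W →ₗ[k] k} {η : V →ₗ[k] k} {ε : W →ₗ[k] k}
    {ΔV : V →ₗ[k] V ⊗[k] V} {ΔW : W →ₗ[k] W ⊗[k] W}
    (hη : IsCocentralForm ΔV η) (hε : IsCocentralForm ΔW ε)
    {ζ : (V ⊗[k] W) ⊗[k] (V ⊗[k] W) →ₗ[k] k}
    (hζ : ∀ (f f' : V) (x y : W), ζ ((f ⊗ₜ[k] x) ⊗ₜ[k] (f' ⊗ₜ[k] y)) = p f y * (ε x * η f'))
    (s t : V ⊗[k] W) :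
    formConv (smashComul k (TensorProduct.comm k V W).toLinearMap ΔV ΔW)
        (TensorProduct.curry ζ s) ((TensorProduct.curry ζ).flip t)
      = formConv (smashComul k (TensorProduct.comm k V W).toLinearMap ΔV ΔW)
        ((TensorProduct.curry ζ).flip t) (TensorProduct.curry ζ s) := by
  have hleft (f : V) (x : W) :
      TensorProduct.curry ζ (f ⊗ₜ[k] x) = ε x • smashCounit k η (p f) := by
    ext
    simp [hζ, mul_left_comm, mul_comm]
  have hright (f : V) (y : W) :
      (TensorProduct.curry ζ).flip (f ⊗ₜ[k] y) = η f • smashCounit k (p.flip y) ε := by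
    ext
    simp [hζ, mul_left_comm, mul_comm]
  induction s with
  | zero => simp
  | add s₁ s₂ h₁ h₂ => simp only [map_add, LinearMap.add_apply, h₁, h₂]
  | tmul f x =>
    induction t with
    | zero => simp
    | add t₁ t₂ h₁ h₂ => simp only [map_add, LinearMap.add_apply, h₁, h₂]
    | tmul f' y =>
      simp only [hleft, hright, map_smul, LinearMap.smul_apply, formConv_smashComul_comm,
        hη.formConv_comm, hε.formConv_comm]
      exact smul_comm _ _ _

theorem homLongCodouble_D_equation_general {p : V →ₗ[k] W →ₗ[k] k}
    {η : V →ₗ[k] k} {ε : W →ₗ[k] k} {ΔV : V →ₗ[k] V ⊗[k] V} {ΔW : W →ₗ[k] W ⊗[k] W}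
    (hη : IsCocentralForm ΔV η) (hε : IsCocentralForm ΔW ε)
    {ζ : (V ⊗[k] W) ⊗[k] (V ⊗[k] W) →ₗ[k] k}
    (hζ : ∀ (f f' : V) (x y : W), ζ ((f ⊗ₜ[k] x) ⊗ₜ[k] (f' ⊗ₜ[k] y)) = p f y * (ε x * η f'))
    {ζ12 ζ23 : ((V ⊗[k] W) ⊗[k] (V ⊗[k] W)) ⊗[k] (V ⊗[k] W) →ₗ[k] k}
    (hζ12 : ∀ a b c, ζ12 ((a ⊗ₜ[k] b) ⊗ₜ[k] c) = ζ (a ⊗ₜ[k] b) * smashCounit k η ε c)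
    (hζ23 : ∀ a b c, ζ23 ((a ⊗ₜ[k] b) ⊗ₜ[k] c) = smashCounit k η ε a * ζ (b ⊗ₜ[k] c))
    (T : V ⊗[k] W →ₗ[k] V ⊗[k] W) :
    (TensorProduct.lid k k).toLinearMap ∘ₗ TensorProduct.map ζ12 ζ23
        ∘ₗ convDelta3 k (smashComul k (TensorProduct.comm k V W).toLinearMap ΔV ΔW ∘ₗ T)
      = (TensorProduct.lid k k).toLinearMap ∘ₗ TensorProduct.map ζ23 ζ12
          ∘ₗ convDelta3 k (smashComul k (TensorProduct.comm k V W).toLinearMap ΔV ΔW ∘ₗ T) := by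
  change formConv _ ζ12 ζ23 = formConv _ ζ23 ζ12
  refine formConv_convDelta3_comm hζ12 hζ23 ((hη.smashComul_comm hε).comp T) fun s t => ?_
  exact congrArg (· ∘ₗ T) (formConv_smashComul_curry_comm hη hε hζ s t)

end HomLongCodouble

set_option maxHeartbeats 2000000 in
/-- the D-type equation `ζ¹² ∗ ζ²³ = ζ²³ ∗ ζ¹²` for the linear
form `ζ` on the Hom-Long codouble `H* ⊗ H`.  Here `α_X⁻¹ = ᾱ⁻¹ ⊗ α⁻¹`, where
`ᾱ⁻¹(f) = f ∘ α = αH.dualMap f`. -/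
theorem homLongCodouble_D_equation
    {H : Type*} [AddCommGroup H] [Module k H] [FiniteDimensional k H] (q : ℤ)
    (αH : H ≃ₗ[k] H) (μ : H →ₗ[k] H →ₗ[k] H) (e : H)
    (Δ : H →ₗ[k] H ⊗[k] H) (ε : H →ₗ[k] k)
    (hH : IsHomBialgebra k αH μ e Δ ε)
    (Δbar : Module.Dual k H →ₗ[k] Module.Dual k H ⊗[k] Module.Dual k H)
    (hΔbar : ∀ (f : Module.Dual k H) (x y : H),
        TensorProduct.dualDistrib k H H (Δbar f) (x ⊗ₜ[k] y)
          = f (αH.symm (αH.symm (μ y x))))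
    (ζ : (Module.Dual k H ⊗[k] H) ⊗[k] (Module.Dual k H ⊗[k] H) →ₗ[k] k)
    (hζ : ∀ (f f' : Module.Dual k H) (x y : H),
        ζ ((f ⊗ₜ[k] x) ⊗ₜ[k] (f' ⊗ₜ[k] y)) = f ((αH ^ q) y) * (ε x * f' e))
    (ζ12 ζ23 : ((Module.Dual k H ⊗[k] H) ⊗[k] (Module.Dual k H ⊗[k] H)) ⊗[k]
        (Module.Dual k H ⊗[k] H) →ₗ[k] k)
    (hζ12 : ∀ (a b c : Module.Dual k H ⊗[k] H),
        ζ12 ((a ⊗ₜ[k] b) ⊗ₜ[k] c)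
          = ζ (a ⊗ₜ[k] b) * smashCounit k (Module.Dual.eval k H e) ε c)
    (hζ23 : ∀ (a b c : Module.Dual k H ⊗[k] H),
        ζ23 ((a ⊗ₜ[k] b) ⊗ₜ[k] c)
          = smashCounit k (Module.Dual.eval k H e) ε a * ζ (b ⊗ₜ[k] c)) :
    (TensorProduct.lid k k).toLinearMap ∘ₗ TensorProduct.map ζ12 ζ23
        ∘ₗ convDelta3 (C := Module.Dual k H ⊗[k] H) k
            (smashComul k (TensorProduct.comm k (Module.Dual k H) H).toLinearMap Δbar Δ
              ∘ₗ TensorProduct.map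
                  (αH.dualMap.toLinearMap ∘ₗ αH.dualMap.toLinearMap)
                  (αH.symm.toLinearMap ∘ₗ αH.symm.toLinearMap))
      = (TensorProduct.lid k k).toLinearMap ∘ₗ TensorProduct.map ζ23 ζ12
          ∘ₗ convDelta3 (C := Module.Dual k H ⊗[k] H) k
              (smashComul k (TensorProduct.comm k (Module.Dual k H) H).toLinearMap Δbar Δ
                ∘ₗ TensorProduct.map
                    (αH.dualMap.toLinearMap ∘ₗ αH.dualMap.toLinearMap)
                    (αH.symm.toLinearMap ∘ₗ αH.symm.toLinearMap)) := by
  have hη : IsCocentralForm Δbar (Module.Dual.eval k H e) :=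
    isCocentralForm_eval (fun x => by rw [hH.1.unit_mul_eq_mul_unit]) hΔbar
  exact homLongCodouble_D_equation_general (p := LinearMap.lcomp k k (αH ^ q).toLinearMap)
    hη hH.2.1.isCocentralForm_counit hζ hζ12 hζ23 _
end
end

section
/- Let (H, α_H, S) be a Hom-Hopf algebra over a field k with α_H bijective, and let m ∈ ℤ. Then the linear map Φ : H⊗H → H⊗H defined by Φ(c⊗a) = α_H^{-2}((a₂)₁) ⊗ S(α_H^{m-2}(a₁)) (α_H^{-2}(c) α_H^{m-4}((a₂)₂)), where Δ(a) = a₁⊗a₂ and (a₂)₁⊗(a₂)₂ = Δ(a₂), is a Hom-monoidal entwining datum, i.e. (H,H,Φ) satisfies the Hom-entwining axioms (E1)-(E4) together with (E5) and (E6) (with the first factor H as the Hom-coalgebra and the second as the Hom-algebra). -/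
open TensorProduct BigOperators

noncomputable section

variable (k : Type*) [Field k]

/-!
Composing the product and the coproduct of a Hom-Hopf algebra with `α⁻¹` gives an ordinary Hopf
algebra `H` on which `α` is a bialgebra automorphism, and `Φ` becomes
`c ⊗ a ↦ a₂ ⊗ β(S(a₁)) c β(a₃)` with `β = α ^ m`. For an arbitrary bialgebra map `β : A → B` out of
a Hopf algebra this is a monoidal entwining: in the convolution algebra `Hom(A, A ⊗ B)` the map
`Φ(c ⊗ -)` is the conjugate `u⁻¹ * i * (1 ⊗ c) * u`, where `u = 1 ⊗ β` and `i(a) = a ⊗ 1`, and all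
axioms but (E1), (E4) compare two conjugates of this kind; (E1) holds because `S` reverses products.
Since `Φ` commutes with `α`, twisting the structure maps by `α` again turns these axioms into the
Hom-axioms.
-/

section Convolution

open Coalgebra Bialgebra HopfAlgebra WithConv

variable {R A B C : Type*} [CommSemiring R]

section Coalgebra

variable [AddCommMonoid C] [Module R C] [Coalgebra R C] [Semiring A] [Algebra R A]
  [Semiring B] [Algebra R B]

lemma toConv_toSpanSingleton_comp_counit_mul (x : A) (f : WithConv (C →ₗ[R] A)) :
    toConv (LinearMap.toSpanSingleton R A x ∘ₗ counit) * f =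
      toConv (LinearMap.mulLeft R x ∘ₗ f.ofConv) := by
  ext
  simp [← LinearMap.map_comp_rTensor]

variable (R C) in
/-- The constant map `c ↦ ε(c) x` from a coalgebra `C` with value `x : A`, bundled as an algebra
homomorphism into the convolution algebra. -/
def convConst : A →ₐ[R] WithConv (C →ₗ[R] A) :=
  AlgHom.ofLinearMap
    { toFun := fun x ↦ toConv (LinearMap.toSpanSingleton R A x ∘ₗ counit)
      map_add' := fun x y ↦ by ext; simp
      map_smul' := fun r x ↦ by ext; simp [smul_comm r] }
    (by ext; simp [Algebra.algebraMap_eq_smul_one])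
    (fun x y ↦ by
      ext
      simp [toConv_toSpanSingleton_comp_counit_mul])

lemma convConst_apply (x : A) (c : C) : convConst R C x c = counit (R := R) c • x := rfl

@[simp]
lemma convConst_mul_apply (x : A) (f : WithConv (C →ₗ[R] A)) (c : C) :
    (convConst R C x * f) c = x * f c :=
  congr($(toConv_toSpanSingleton_comp_counit_mul x f) c)

@[simp]
lemma mul_convConst_apply (f : WithConv (C →ₗ[R] A)) (x : A) (c : C) :
    (f * convConst R C x) c = f c * x := by
  simp [convConst, ← LinearMap.map_comp_lTensor]

lemma commute_convConst {f : WithConv (C →ₗ[R] A)} {x : A} (h : ∀ c, Commute (f c) x) :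
    Commute f (convConst R C x) := by
  ext c
  rw [mul_convConst_apply, convConst_mul_apply, h c]

/-- Postcomposition with an algebra homomorphism, as a homomorphism of convolution algebras. -/
def convPostcomp (φ : A →ₐ[R] B) : WithConv (C →ₗ[R] A) →ₐ[R] WithConv (C →ₗ[R] B) :=
  AlgHom.ofLinearMap
    { toFun := fun f ↦ toConv (φ.toLinearMap ∘ₗ f.ofConv)
      map_add' := fun f g ↦ by ext; simp
      map_smul' := fun r f ↦ by ext; simp }
    (by ext; simp)
    (fun f g ↦ congr(toConv $(LinearMap.algHom_comp_convMul_distrib φ f g)))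

@[simp]
lemma convPostcomp_apply (φ : A →ₐ[R] B) (f : WithConv (C →ₗ[R] A)) (c : C) :
    convPostcomp φ f c = φ (f c) := rfl

/-- The conjugate `u⁻¹ * f * x * u` of the product of a map `f` and a constant `x` by a convolution
unit `u`. -/
def convConj (u : (WithConv (C →ₗ[R] A))ˣ) (f : WithConv (C →ₗ[R] A)) :
    A →ₗ[R] WithConv (C →ₗ[R] A) :=
  LinearMap.mulLeft R u⁻¹.val ∘ₗ LinearMap.mulRight R u.val ∘ₗ LinearMap.mulLeft R f ∘ₗ
    (convConst R C).toLinearMap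

lemma convConj_apply (u : (WithConv (C →ₗ[R] A))ˣ) (f : WithConv (C →ₗ[R] A)) (x : A) :
    convConj u f x = u⁻¹.val * (f * convConst R C x * u.val) := rfl

lemma convConj_mul_mul {u v : (WithConv (C →ₗ[R] A))ˣ} (f : WithConv (C →ₗ[R] A)) (x : A) {y : A}
    (h : ∀ c, Commute (u.val c) y) :
    convConj (u * v) f (x * y) = convConj v (convConj u f x) y := by
  simp only [convConj_apply, map_mul, mul_inv_rev, Units.val_mul, mul_assoc]
  rw [(commute_convConst h).left_comm]

lemma convConj_mul_convConj (u : (WithConv (C →ₗ[R] A))ˣ) (f : WithConv (C →ₗ[R] A))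
    {g : WithConv (C →ₗ[R] A)} {x : A} (y : A) (h : ∀ c, Commute (g c) x) :
    convConj u f x * convConj u g y = convConj u (f * g) (x * y) := by
  simp only [convConj_apply, map_mul, mul_assoc, Units.mul_inv_cancel_left]
  rw [(commute_convConst h).left_comm]

end Coalgebra

section HopfAlgebra

variable [Semiring A] [HopfAlgebra R A] [Semiring B] [Algebra R B]

/-- An algebra homomorphism `γ` out of a Hopf algebra as a unit of the convolution algebra, with
inverse `γ ∘ S`. -/
def convUnit (γ : A →ₐ[R] B) : (WithConv (A →ₗ[R] B))ˣ :=
  Units.map (convPostcomp (C := A) γ).toMonoidHom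
    ⟨toConv .id, toConv (antipode R), LinearMap.id_mul_antipode, LinearMap.antipode_mul_id⟩

@[simp]
lemma convUnit_apply (γ : A →ₐ[R] B) (a : A) : (convUnit γ).val a = γ a := rfl

lemma convUnit_ofId_comp_counit :
    convUnit ((Algebra.ofId R B).comp (counitAlgHom R A)) = 1 := by
  ext; simp [Algebra.ofId_apply]

end HopfAlgebra

lemma bialgHom_map_antipode [Semiring A] [HopfAlgebra R A] [Semiring B] [HopfAlgebra R B]
    (β : A →ₐc[R] B) (a : A) : β (antipode R a) = antipode R (β a) := by
  have h : toConv (antipode R ∘ₗ (β : A →ₗc[R] B).toLinearMap) * (convUnit (β : A →ₐ[R] B)).val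
      = 1 := by
    have hβ := LinearMap.convMul_comp_coalgHom_distrib (toConv (antipode R))
      (toConv (.id : B →ₗ[R] B)) (β : A →ₗc[R] B)
    rw [LinearMap.antipode_mul_id] at hβ
    ext a
    exact congr($hβ.symm a).trans (by simp)
  exact congr($(Units.inv_eq_of_mul_eq_one_left h) a)

end Convolution

section Entwining

open Coalgebra Bialgebra HopfAlgebra WithConv

variable {R A B E : Type*} [CommSemiring R] [Semiring A] [HopfAlgebra R A] [Semiring B]
  [Bialgebra R B] [Semiring E] [Algebra R E]

/-- The map `c ⊗ (x ⊗ (y ⊗ z)) ↦ y ⊗ β(S(x)) c β(z)`, which `ydEntwining` precomposes with the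
iterated comultiplication. -/
def ydSandwich (β : A →ₐc[R] B) : B ⊗[R] (A ⊗[R] (A ⊗[R] A)) →ₗ[R] A ⊗[R] B :=
  map .id (LinearMap.mul' R B ∘ₗ
      map ((β : A →ₗ[R] B) ∘ₗ antipode R) (LinearMap.mul' R B ∘ₗ map .id (β : A →ₗ[R] B)))
    ∘ₗ (leftComm R A A (B ⊗[R] A)).toLinearMap
    ∘ₗ map .id (leftComm R B A A).toLinearMap
    ∘ₗ (leftComm R B A (A ⊗[R] A)).toLinearMap

/-- The Yetter–Drinfeld entwining map `c ⊗ a ↦ a₂ ⊗ β(S(a₁)) c β(a₃)` of a bialgebra homomorphism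
`β : A → B` out of a Hopf algebra. -/
def ydEntwining (β : A →ₐc[R] B) : B ⊗[R] A →ₗ[R] A ⊗[R] B :=
  ydSandwich β ∘ₗ map .id (map .id comul) ∘ₗ map .id comul

@[simp]
lemma ydSandwich_tmul (β : A →ₐc[R] B) (c : B) (x y z : A) :
    ydSandwich β (c ⊗ₜ (x ⊗ₜ (y ⊗ₜ z))) = y ⊗ₜ (β (antipode R x) * (c * β z)) := rfl

lemma ydEntwining_tmul (β : A →ₐc[R] B) (c : B) (a : A) :
    ydEntwining β (c ⊗ₜ a) = ydSandwich β (c ⊗ₜ map .id comul (comul (R := R) a)) := rfl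

lemma ydEntwining_tmul_one (β : A →ₐc[R] B) (c : B) : ydEntwining β (c ⊗ₜ 1) = 1 ⊗ₜ c := by
  simp [ydEntwining_tmul, Algebra.TensorProduct.one_def]

/-- The map `a ↦ ydEntwining β (c ⊗ a)` as an element of the convolution algebra
`Hom(A, A ⊗ B)`. -/
def ydConv (β : A →ₐc[R] B) (c : B) : WithConv (A →ₗ[R] A ⊗[R] B) :=
  toConv (ydEntwining β ∘ₗ TensorProduct.mk R B A c)

@[simp]
lemma ydConv_apply (β : A →ₐc[R] B) (c : B) (a : A) :
    ydConv β c a = ydEntwining β (c ⊗ₜ a) := rfl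

lemma toConv_mul'_comp_map_comp_ydConv (β : A →ₐc[R] B) (c : B) {f : WithConv (A →ₗ[R] E)}
    {g : B →ₐ[R] E} (hfg : ∀ a b, Commute (f a) (g b)) :
    toConv (LinearMap.mul' R E ∘ₗ map f.ofConv g.toLinearMap ∘ₗ (ydConv β c).ofConv) =
      convConj (convUnit (g.comp (β : A →ₐ[R] B))) f (g c) := by
  set u := convUnit (g.comp (β : A →ₐ[R] B)) with hu
  have key : LinearMap.mul' R E ∘ₗ map f.ofConv g.toLinearMap ∘ₗ ydSandwich β ∘ₗ
        TensorProduct.mk R B _ c =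
      LinearMap.mul' R E ∘ₗ map u⁻¹.val.ofConv
        (LinearMap.mul' R E ∘ₗ map (f * convConst R A (g c)).ofConv u.val.ofConv) := by
    ext x y z
    suffices f y * (g (β (antipode R x)) * (g c * g (β z))) =
        g (β (antipode R x)) * (f y * g c * g (β z)) by
      simpa [hu, -LinearMap.convMul_apply]
    rw [← mul_assoc, (hfg y _).eq]
    simp only [mul_assoc]
  ext a
  exact congr($key (map .id comul (comul (R := R) a))).trans <| by
    simp [convConj_apply, LinearMap.convMul_def, map_map, LinearMap.comp_assoc]

open Algebra.TensorProduct (includeLeft includeRight)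

lemma convPostcomp_ydConv (β : A →ₐc[R] B) (c : B) (φ : A ⊗[R] B →ₐ[R] E) :
    convPostcomp φ (ydConv β c) =
      convConj (convUnit ((φ.comp includeRight).comp (β : A →ₐ[R] B)))
        (toConv (φ.comp includeLeft).toLinearMap) (φ (1 ⊗ₜ c)) := by
  refine .trans ?_ (toConv_mul'_comp_map_comp_ydConv β c
    (f := toConv (φ.comp includeLeft).toLinearMap) (g := φ.comp includeRight) fun a b ↦ ?_)
  · have hφ : φ.toLinearMap = LinearMap.mul' R E ∘ₗ
        map (φ.comp includeLeft).toLinearMap (φ.comp includeRight).toLinearMap := by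
      ext a b
      simp [← map_mul]
    ext a
    simpa using congr($hφ (ydEntwining β (c ⊗ₜ a)))
  · simp [Commute, SemiconjBy, ← map_mul]

lemma ydSandwich_comp_map_mul' (β : A →ₐc[R] B) :
    map (LinearMap.mul' R A) .id ∘ₗ (TensorProduct.assoc R A A B).symm.toLinearMap ∘ₗ
        map .id (ydSandwich β) ∘ₗ
        (TensorProduct.assoc R A B (A ⊗[R] (A ⊗[R] A))).toLinearMap ∘ₗ map (ydSandwich β) .id =
      ydSandwich β ∘ₗ map .id (LinearMap.mul' R (A ⊗[R] (A ⊗[R] A))) ∘ₗ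
        (TensorProduct.assoc R B (A ⊗[R] (A ⊗[R] A)) (A ⊗[R] (A ⊗[R] A))).toLinearMap := by
  ext c x y z x' y' z'
  simp [antipode_mul_antidistrib, mul_assoc]

lemma ydEntwining_comp_map_mul' (β : A →ₐc[R] B) :
    map (LinearMap.mul' R A) .id ∘ₗ (TensorProduct.assoc R A A B).symm.toLinearMap ∘ₗ
        map .id (ydEntwining β) ∘ₗ (TensorProduct.assoc R A B A).toLinearMap ∘ₗ
        map (ydEntwining β) .id =
      ydEntwining β ∘ₗ map .id (LinearMap.mul' R A) ∘ₗ
        (TensorProduct.assoc R B A A).toLinearMap := by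
  ext c a b
  let δ : A →ₐ[R] A ⊗[R] (A ⊗[R] A) :=
    (Algebra.TensorProduct.map (.id R A) (comulAlgHom R A)).comp (comulAlgHom R A)
  have hΦ (c : B) (a : A) : ydEntwining β (c ⊗ₜ a) = ydSandwich β (c ⊗ₜ δ a) := rfl
  have hδ (w : A ⊗[R] B) : map .id (ydEntwining β) (TensorProduct.assoc R A B A (w ⊗ₜ b)) =
      map .id (ydSandwich β) (TensorProduct.assoc R A B (A ⊗[R] (A ⊗[R] A)) (w ⊗ₜ δ b)) := by
    induction w with
    | zero => simp
    | tmul x y => rfl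
    | add w w' hw hw' => simp only [add_tmul, map_add, hw, hw']
  simpa [hΦ, hδ, ← map_mul] using congr($(ydSandwich_comp_map_mul' β) ((c ⊗ₜ δ a) ⊗ₜ δ b))

lemma map_counit_comp_ydEntwining (β : A →ₐc[R] B) :
    (TensorProduct.rid R A).toLinearMap ∘ₗ map .id counit ∘ₗ ydEntwining β =
      (TensorProduct.lid R A).toLinearMap ∘ₗ map counit .id := by
  ext c a
  let φ : A ⊗[R] B →ₐ[R] A := (Algebra.TensorProduct.rid R R A).toAlgHom.comp
    (Algebra.TensorProduct.map (.id R A) (counitAlgHom R B))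
  have hφ : (φ.comp includeRight).comp (β : A →ₐ[R] B) =
      (Algebra.ofId R A).comp (counitAlgHom R A) := by
    ext; simp [φ, Algebra.ofId_apply, Algebra.algebraMap_eq_smul_one]
  calc φ (ydEntwining β (c ⊗ₜ a)) = φ (a ⊗ₜ 1) * φ (1 ⊗ₜ c) := by
        rw [← ydConv_apply, ← convPostcomp_apply, convPostcomp_ydConv, convConj_apply,
          hφ, convUnit_ofId_comp_counit, inv_one, Units.val_one, one_mul, mul_one,
          mul_convConst_apply]
        rfl
    _ = counit (R := R) c • a := by simp [φ]

lemma counit_ydEntwining_one_tmul (β : A →ₐc[R] B) (a : A) :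
    TensorProduct.lid R B (map counit .id (ydEntwining β (1 ⊗ₜ a))) = counit (R := R) a • 1 := by
  let φ : A ⊗[R] B →ₐ[R] B := (Algebra.TensorProduct.lid R B).toAlgHom.comp
    (Algebra.TensorProduct.map (counitAlgHom R A) (.id R B))
  have hφ : toConv (φ.comp includeLeft).toLinearMap = 1 := by
    ext; simp [φ, Algebra.algebraMap_eq_smul_one]
  calc φ (ydEntwining β (1 ⊗ₜ a)) = (1 : WithConv (A →ₗ[R] B)) a := by
        rw [← ydConv_apply, ← convPostcomp_apply, convPostcomp_ydConv, convConj_apply,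
          hφ, ← Algebra.TensorProduct.one_def, map_one, map_one, mul_one, one_mul, Units.inv_mul]
    _ = counit (R := R) a • 1 := by simp [Algebra.algebraMap_eq_smul_one]

lemma toConv_comp_includeLeft_mul_toConv_comp_includeRight {C D F : Type*} [AddCommMonoid C]
    [Module R C] [Coalgebra R C] [Semiring D] [Algebra R D] [Semiring F] [Algebra R F]
    (g : D ⊗[R] E →ₐ[R] F) (f : C →ₗ[R] D) (f' : C →ₗ[R] E) :
    toConv ((g.comp includeLeft).toLinearMap ∘ₗ f) *
        toConv ((g.comp includeRight).toLinearMap ∘ₗ f') =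
      toConv (g.toLinearMap ∘ₗ map f f' ∘ₗ comul) := by
  have h : LinearMap.mul' R F ∘ₗ map ((g.comp includeLeft).toLinearMap ∘ₗ f)
      ((g.comp includeRight).toLinearMap ∘ₗ f') = g.toLinearMap ∘ₗ map f f' := by
    ext; simp [← map_mul]
  ext a
  exact congr($h (comul a))

lemma convUnit_comp_comul (g : B ⊗[R] B →ₐ[R] E) (β : A →ₐc[R] B) :
    convUnit ((g.comp (comulAlgHom R B)).comp (β : A →ₐ[R] B)) =
      convUnit ((g.comp includeLeft).comp (β : A →ₐ[R] B)) *
        convUnit ((g.comp includeRight).comp (β : A →ₐ[R] B)) := by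
  refine Units.ext <| .trans ?_ (toConv_comp_includeLeft_mul_toConv_comp_includeRight g
    (β : A →ₗ[R] B) (β : A →ₗ[R] B)).symm
  ext a
  exact congr(g $((CoalgHomClass.map_comp_comul_apply β a).symm))

lemma map_comul_ydEntwining_tmul (β : A →ₐc[R] B) (c : B) (a : A) :
    map .id comul (ydEntwining β (c ⊗ₜ a)) =
      convConj (convUnit ((includeRight.comp includeLeft).comp (β : A →ₐ[R] B)) *
          convUnit ((includeRight.comp includeRight).comp (β : A →ₐ[R] B)))
        (toConv (includeLeft : A →ₐ[R] A ⊗[R] (B ⊗[R] B)).toLinearMap) (1 ⊗ₜ comul c) a := by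
  let φ : A ⊗[R] B →ₐ[R] A ⊗[R] (B ⊗[R] B) :=
    Algebra.TensorProduct.map (.id R A) (comulAlgHom R B)
  have hφl : φ.comp includeLeft = includeLeft := by ext; simp [φ]
  have hφr : φ.comp includeRight = includeRight.comp (comulAlgHom R B) := by ext; simp [φ]
  change convPostcomp φ (ydConv β c) a = _
  rw [convPostcomp_ydConv, hφl, hφr, convUnit_comp_comul]
  simp [φ]

lemma assoc_map_ydEntwining_symm_tmul (β : A →ₐc[R] B) (c : B) (w : A ⊗[R] B) :
    TensorProduct.assoc R A B B (map (ydEntwining β) .id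
        ((TensorProduct.assoc R B A B).symm (c ⊗ₜ w))) =
      LinearMap.mul' R _ (map
        (convPostcomp (Algebra.TensorProduct.map (.id R A) includeLeft) (ydConv β c)).ofConv
        (includeRight.comp includeRight : B →ₐ[R] A ⊗[R] (B ⊗[R] B)).toLinearMap w) := by
  have h (x : A ⊗[R] B) (y : B) : TensorProduct.assoc R A B B (x ⊗ₜ y) =
      Algebra.TensorProduct.map (.id R A) includeLeft x * 1 ⊗ₜ (1 ⊗ₜ y) := by
    induction x with
    | zero => simp
    | add x x' hx hx' => simp [add_tmul, add_mul, hx, hx']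
    | tmul x z => simp
  induction w with
  | zero => simp
  | add w w' hw hw' => simp [tmul_add, hw, hw']
  | tmul x y => simp [h]

lemma assoc_map_ydEntwining_symm_tmul_ydEntwining (β : A →ₐc[R] B) (c d : B) (a : A) :
    TensorProduct.assoc R A B B (map (ydEntwining β) .id
        ((TensorProduct.assoc R B A B).symm (c ⊗ₜ ydEntwining β (d ⊗ₜ a)))) =
      convConj (convUnit ((includeRight.comp includeLeft).comp (β : A →ₐ[R] B)) *
          convUnit ((includeRight.comp includeRight).comp (β : A →ₐ[R] B)))
        (toConv (includeLeft : A →ₐ[R] A ⊗[R] (B ⊗[R] B)).toLinearMap) (1 ⊗ₜ (c ⊗ₜ d)) a := by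
  let φ : A ⊗[R] B →ₐ[R] A ⊗[R] (B ⊗[R] B) := Algebra.TensorProduct.map (.id R A) includeLeft
  let g : B →ₐ[R] A ⊗[R] (B ⊗[R] B) := includeRight.comp includeRight
  have hφl : φ.comp includeLeft = includeLeft := by ext; simp [φ]
  have hφr : φ.comp includeRight = includeRight.comp includeLeft := by ext; simp [φ]
  have hcomm (x : A ⊗[R] B) (y : B) : Commute (φ x) (g y) := by
    induction x with
    | zero => simp
    | add x x' hx hx' => simpa using hx.add_left hx'
    | tmul x z => simp [φ, g, Commute, SemiconjBy]
  have hcd : (1 : A) ⊗ₜ[R] (c ⊗ₜ[R] d) = φ (1 ⊗ₜ c) * g d := by simp [φ, g]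
  have hud (x : A) : Commute ((includeRight.comp includeLeft) (β x)) (g d) := by
    rw [← hφr]
    exact hcomm (1 ⊗ₜ β x) d
  rw [hcd, convConj_mul_mul _ _ hud, ← hφl, ← hφr, ← convPostcomp_ydConv,
    ← toConv_mul'_comp_map_comp_ydConv β d fun x ↦ hcomm _]
  exact assoc_map_ydEntwining_symm_tmul β c _

lemma map_comul_comp_ydEntwining (β : A →ₐc[R] B) :
    map .id comul ∘ₗ ydEntwining β =
      (TensorProduct.assoc R A B B).toLinearMap ∘ₗ map (ydEntwining β) .id ∘ₗ
        (TensorProduct.assoc R B A B).symm.toLinearMap ∘ₗ map .id (ydEntwining β) ∘ₗ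
        (TensorProduct.assoc R B B A).toLinearMap ∘ₗ map comul .id := by
  ext c a
  have h (t : B ⊗[R] B) : TensorProduct.assoc R A B B (map (ydEntwining β) .id
      ((TensorProduct.assoc R B A B).symm (map .id (ydEntwining β)
        (TensorProduct.assoc R B B A (t ⊗ₜ a))))) =
      convConj (convUnit ((includeRight.comp includeLeft).comp (β : A →ₐ[R] B)) *
          convUnit ((includeRight.comp includeRight).comp (β : A →ₐ[R] B)))
        (toConv (includeLeft : A →ₐ[R] A ⊗[R] (B ⊗[R] B)).toLinearMap) (1 ⊗ₜ t) a := by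
    induction t with
    | zero => simp
    | add t t' ht ht' => simp [add_tmul, tmul_add, ht, ht']
    | tmul c d => exact assoc_map_ydEntwining_symm_tmul_ydEntwining β c d a
  simp [map_comul_ydEntwining_tmul, h]

lemma map_includeLeft_ydConv_mul_map_includeRight_ydConv (β : A →ₐc[R] B) (c d : B) :
    convPostcomp (Algebra.TensorProduct.map (includeLeft : A →ₐ[R] A ⊗[R] A) (.id R B))
          (ydConv β c) *
        convPostcomp (Algebra.TensorProduct.map includeRight (.id R B)) (ydConv β d) =
      convPostcomp (Algebra.TensorProduct.map (comulAlgHom R A) (.id R B))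
        (ydConv β (c * d)) := by
  have hcomul : toConv (includeLeft.comp includeLeft).toLinearMap *
      toConv (includeLeft.comp includeRight).toLinearMap =
        toConv (includeLeft.comp (comulAlgHom R A) : A →ₐ[R] (A ⊗[R] A) ⊗[R] B).toLinearMap := by
    have h := toConv_comp_includeLeft_mul_toConv_comp_includeRight
      (includeLeft : A ⊗[R] A →ₐ[R] (A ⊗[R] A) ⊗[R] B) (.id : A →ₗ[R] A) .id
    rwa [map_id, LinearMap.id_comp] at h
  have hcomm (a : A) : Commute
      (toConv (includeLeft.comp includeRight : A →ₐ[R] (A ⊗[R] A) ⊗[R] B).toLinearMap a)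
      (1 ⊗ₜ c) := by
    simp [Commute, SemiconjBy]
  simp only [convPostcomp_ydConv, Algebra.TensorProduct.map_comp_includeLeft,
    Algebra.TensorProduct.map_comp_includeRight, Algebra.TensorProduct.map_tmul, map_one,
    AlgHom.comp_id, AlgHom.coe_id, id]
  rw [convConj_mul_convConj _ _ _ hcomm, hcomul]
  simp

lemma map_mul'_comp_map_ydEntwining (β : A →ₐc[R] B) :
    map .id (LinearMap.mul' R B) ∘ₗ (tensorTensorTensorComm R A B A B).toLinearMap ∘ₗ
        map (ydEntwining β) (ydEntwining β) ∘ₗ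
        (tensorTensorTensorComm R B B A A).toLinearMap ∘ₗ map .id comul =
      map comul .id ∘ₗ ydEntwining β ∘ₗ map (LinearMap.mul' R B) .id := by
  ext c d a
  let φ₁ : A ⊗[R] B →ₐ[R] (A ⊗[R] A) ⊗[R] B := Algebra.TensorProduct.map includeLeft (.id R B)
  let φ₂ : A ⊗[R] B →ₐ[R] (A ⊗[R] A) ⊗[R] B := Algebra.TensorProduct.map includeRight (.id R B)
  have hφ : map .id (LinearMap.mul' R B) ∘ₗ (tensorTensorTensorComm R A B A B).toLinearMap =
      LinearMap.mul' R _ ∘ₗ map φ₁.toLinearMap φ₂.toLinearMap := by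
    ext; simp [φ₁, φ₂]
  have hcd : (LinearMap.mul' R _ ∘ₗ map φ₁.toLinearMap φ₂.toLinearMap) ∘ₗ
        map (ydEntwining β) (ydEntwining β) ∘ₗ
        (tensorTensorTensorComm R B B A A).toLinearMap ∘ₗ TensorProduct.mk R _ _ (c ⊗ₜ d) =
      LinearMap.mul' R _ ∘ₗ map (convPostcomp φ₁ (ydConv β c)).ofConv
        (convPostcomp φ₂ (ydConv β d)).ofConv := by
    ext; rfl
  rw [← hφ] at hcd
  exact congr($hcd (comul a)).trans
    congr($(map_includeLeft_ydConv_mul_map_includeRight_ydConv β c d) a)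

lemma map_comp_ydEntwining {A' B' : Type*} [Semiring A'] [HopfAlgebra R A'] [Semiring B']
    [Bialgebra R B'] {β : A →ₐc[R] B} {β' : A' →ₐc[R] B'} {f : A →ₐc[R] A'} {g : B →ₐc[R] B'}
    (h : β'.comp f = g.comp β) :
    map (f : A →ₗ[R] A') (g : B →ₗ[R] B') ∘ₗ ydEntwining β =
      ydEntwining β' ∘ₗ map (g : B →ₗ[R] B') (f : A →ₗ[R] A') := by
  let f₁ : A →ₗ[R] A' := f
  have hβ (a : A) : β' (f a) = g (β a) := congr($h a)
  have hSandwich : map f₁ (g : B →ₗ[R] B') ∘ₗ ydSandwich β =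
      ydSandwich β' ∘ₗ map (g : B →ₗ[R] B') (map f₁ (map f₁ f₁)) := by
    ext c x y z
    simp [f₁, ← bialgHom_map_antipode, hβ]
  have hcomul : map f₁ f₁ ∘ₗ comul = comul ∘ₗ f₁ := CoalgHomClass.map_comp_comul f
  ext c a
  have hcomul₂ : map f₁ (map f₁ f₁) (map .id comul (comul (R := R) a)) =
      map .id comul (comul (R := R) (f a)) := by
    rw [← show map f₁ f₁ (comul (R := R) a) = comul (f a) from congr($hcomul a), map_map, map_map,
      hcomul]
    rfl
  exact congr($hSandwich (c ⊗ₜ map .id comul (comul (R := R) a))).trans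
    congr(ydSandwich β' (g c ⊗ₜ $hcomul₂))

end Entwining

open Coalgebra in
lemma ydEntwining_isHomMonoidalEntwining {A B : Type*} [Ring A] [HopfAlgebra k A] [Ring B]
    [Bialgebra k B] (β : A →ₐc[k] B) :
    IsHomMonoidalEntwining k (.refl k A) (.mul k A) 1 comul counit (.refl k B) (.mul k B) 1
      comul counit (ydEntwining β) :=
  ⟨⟨by simp, ydEntwining_comp_map_mul' β, map_comul_comp_ydEntwining β,
    map_counit_comp_ydEntwining β, ydEntwining_tmul_one β⟩,
    by simpa [LinearMap.mul'] using map_mul'_comp_map_ydEntwining β, counit_ydEntwining_one_tmul β⟩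

section Twist

lemma tensorTensorTensorComm_map_tensorTensorTensorComm_map {R M N : Type*} [CommSemiring R]
    [AddCommMonoid M] [Module R M] [AddCommMonoid N] [Module R N] {f : M →ₗ[R] M} {g : N →ₗ[R] N}
    {Φ : N ⊗[R] M →ₗ[R] M ⊗[R] N} (hΦ : map f g ∘ₗ Φ = Φ ∘ₗ map g f)
    (t : (N ⊗[R] N) ⊗[R] (M ⊗[R] M)) :
    tensorTensorTensorComm R M N M N (map Φ Φ (tensorTensorTensorComm R N N M M
        (map (map g g) (map f f) t))) =
      map (map f f) (map g g)
        (tensorTensorTensorComm R M N M N (map Φ Φ (tensorTensorTensorComm R N N M M t))) := by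
  have hNM := congr($(tensorTensorTensorComm_comp_map R g g f f) t)
  have hMN := congr($(tensorTensorTensorComm_comp_map R f g f g)
    (map Φ Φ (tensorTensorTensorComm R N N M M t)))
  simp only [LinearMap.comp_apply, LinearEquiv.coe_coe] at hNM hMN
  rw [hNM, map_map, ← hΦ, ← map_map, hMN]

variable {k}
variable {A H : Type*} [AddCommGroup A] [Module k A] [AddCommGroup H] [Module k H]
  {μA : A →ₗ[k] A →ₗ[k] A} {eA : A} {ΔA : A →ₗ[k] A ⊗[k] A} {εA : A →ₗ[k] k}
  {μH : H →ₗ[k] H →ₗ[k] H} {eH : H} {ΔH : H →ₗ[k] H ⊗[k] H} {εH : H →ₗ[k] k}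
  {αA : A ≃ₗ[k] A} {αH : H ≃ₗ[k] H} {Φ : H ⊗[k] A →ₗ[k] A ⊗[k] H}

lemma IsHomEntwining.twist
    (hΦ : IsHomEntwining k (.refl k A) μA eA (.refl k H) ΔH εH Φ)
    (hα : map αA.toLinearMap αH.toLinearMap ∘ₗ Φ = Φ ∘ₗ map αH.toLinearMap αA.toLinearMap) :
    IsHomEntwining k αA (μA.compr₂ αA.toLinearMap) eA
      αH (map αH.toLinearMap αH.toLinearMap ∘ₗ ΔH) εH Φ := by
  obtain ⟨-, hE1, hE2, hE3, hE4⟩ := hΦ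
  simp only [LinearEquiv.refl_toLinearMap] at hE1 hE2
  refine ⟨hα, ?_, ?_, hE3, hE4⟩ <;> refine LinearMap.ext fun t ↦ ?_
  · have hαt (s) : map αA.toLinearMap αH.toLinearMap (Φ s) =
        Φ (map αH.toLinearMap αA.toLinearMap s) := congr($hα s)
    simpa [lift_compr₂, hαt, map_map] using
      congr(map αA.toLinearMap αH.toLinearMap ($hE1 t))
  · have hl (s) : map (map αA.toLinearMap αH.toLinearMap) αH.toLinearMap
          (map Φ (.id : H →ₗ[k] H) s) =
        map Φ .id (map (map αH.toLinearMap αA.toLinearMap) αH.toLinearMap s) := by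
      simp only [map_map, hα, LinearMap.comp_id, LinearMap.id_comp]
    have hr (s) : map αH.toLinearMap (map αA.toLinearMap αH.toLinearMap)
          (map (.id : H →ₗ[k] H) Φ s) =
        map .id Φ (map αH.toLinearMap (map αH.toLinearMap αA.toLinearMap) s) := by
      simp only [map_map, hα, LinearMap.comp_id, LinearMap.id_comp]
    have h := congr(map αA.toLinearMap (map αH.toLinearMap αH.toLinearMap) ($hE2 t))
    simp only [LinearMap.comp_apply, LinearEquiv.coe_coe, map_map_assoc, hl, map_map_assoc_symm,
      hr] at h
    simpa only [map_map, LinearMap.comp_id] using! h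

lemma IsHomMonoidalEntwining.twist
    (hΦ : IsHomMonoidalEntwining k (.refl k A) μA eA ΔA εA (.refl k H) μH eH ΔH εH Φ)
    (hα : map αA.toLinearMap αH.toLinearMap ∘ₗ Φ = Φ ∘ₗ map αH.toLinearMap αA.toLinearMap)
    (hαH : ∀ a b, αH (μH a b) = μH (αH a) (αH b)) :
    IsHomMonoidalEntwining k αA (μA.compr₂ αA.toLinearMap) eA
      (map αA.toLinearMap αA.toLinearMap ∘ₗ ΔA) εA
      αH (μH.compr₂ αH.toLinearMap) eH (map αH.toLinearMap αH.toLinearMap ∘ₗ ΔH) εH Φ := by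
  obtain ⟨hΦ, hE5, hE6⟩ := hΦ
  refine ⟨hΦ.twist hα, LinearMap.ext fun t ↦ ?_, hE6⟩
  simp only [LinearEquiv.refl_toLinearMap, LinearMap.comp_id, map_id] at hE5
  have hμαH : lift μH ∘ₗ map αH.toLinearMap αH.toLinearMap = αH.toLinearMap ∘ₗ lift μH := by
    ext; simp [hαH]
  have hαt : map (map (αH.toLinearMap ∘ₗ αH.toLinearMap) (αH.toLinearMap ∘ₗ αH.toLinearMap))
        (map αA.toLinearMap αA.toLinearMap ∘ₗ ΔA) t =
      map (map αH.toLinearMap αH.toLinearMap) (map αA.toLinearMap αA.toLinearMap)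
        (map .id ΔA (map (map αH.toLinearMap αH.toLinearMap) .id t)) := by
    simp only [map_map, ← map_comp, LinearMap.id_comp, LinearMap.comp_id]
  have h := congr(map (map αA.toLinearMap αA.toLinearMap) (αH.toLinearMap ∘ₗ αH.toLinearMap)
      ($hE5 (map (map αH.toLinearMap αH.toLinearMap) .id t)))
  simp only [LinearMap.comp_apply, LinearEquiv.coe_coe, hαt,
    tensorTensorTensorComm_map_tensorTensorTensorComm_map hα] at h ⊢
  simpa only [map_map, lift_compr₂, LinearMap.comp_assoc, LinearMap.comp_id,
    LinearMap.id_comp, hμαH] using h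

end Twist

section HomYDEntwining

open Coalgebra HopfAlgebra

/-- The group of bialgebra automorphisms, realised inside the linear automorphisms so that their
integer powers are those of linear automorphisms. -/
def bialgAut (R A : Type*) [CommSemiring R] [Semiring A] [Bialgebra R A] :
    Subgroup (A ≃ₗ[R] A) where
  carrier := {α | ∃ f : A ≃ₐc[R] A, ∀ a, f a = α a}
  mul_mem' := by
    rintro α β ⟨f, hf⟩ ⟨g, hg⟩
    exact ⟨g.trans f, fun a ↦ (hf (g a)).trans congr(α $(hg a))⟩
  one_mem' := ⟨.refl R A, fun _ ↦ rfl⟩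
  inv_mem' := by
    rintro α ⟨f, hf⟩
    exact ⟨f.symm, fun a ↦ f.injective <| (f.apply_symm_apply a).trans <|
      (α.apply_symm_apply a).symm.trans (hf _).symm⟩

lemma mem_bialgAut {R A : Type*} [CommSemiring R] [Semiring A] [Bialgebra R A] {α : A ≃ₗ[R] A}
    (h_one : α 1 = 1) (h_mul : ∀ a b, α (a * b) = α a * α b)
    (h_counit : ∀ a, counit (R := R) (α a) = counit (R := R) a)
    (h_comul : ∀ a, map α.toLinearMap α.toLinearMap (comul (R := R) a) = comul (α a)) :
    α ∈ bialgAut R A :=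
  ⟨.ofAlgEquiv (.ofLinearEquiv α h_one h_mul) (by ext; exact h_counit _)
    (by ext; exact h_comul _), fun _ ↦ rfl⟩

section Def

variable {H : Type*} [AddCommGroup H] [Module k H] (m : ℤ) (α : H ≃ₗ[k] H)
  (μ : H →ₗ[k] H →ₗ[k] H) (Δ : H →ₗ[k] H ⊗[k] H) (S : H →ₗ[k] H)

/-- The map `c ⊗ (x ⊗ (y ⊗ z)) ↦ α⁻²(y) ⊗ S(α^(m-2)(x)) (α⁻²(c) α^(m-4)(z))`, which
`homYDEntwining` precomposes with the iterated comultiplication. -/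
def homYDSandwich : H ⊗[k] (H ⊗[k] (H ⊗[k] H)) →ₗ[k] H ⊗[k] H :=
  map (α ^ (-2 : ℤ)).toLinearMap (lift μ ∘ₗ map (S ∘ₗ (α ^ (m - 2)).toLinearMap)
      (lift μ ∘ₗ map (α ^ (-2 : ℤ)).toLinearMap (α ^ (m - 4)).toLinearMap))
    ∘ₗ (leftComm k H H (H ⊗[k] H)).toLinearMap
    ∘ₗ map .id (leftComm k H H H).toLinearMap
    ∘ₗ (leftComm k H H (H ⊗[k] H)).toLinearMap

/-- The map `c ⊗ a ↦ α⁻²((a₂)₁) ⊗ S(α^(m-2)(a₁)) (α⁻²(c) α^(m-4)((a₂)₂))` on a Hom-Hopf algebra,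
the Hom-analogue of `ydEntwining`. -/
def homYDEntwining : H ⊗[k] H →ₗ[k] H ⊗[k] H :=
  homYDSandwich k m α μ S ∘ₗ map .id (map .id Δ) ∘ₗ map .id Δ

lemma homYDSandwich_tmul (c x y z : H) :
    homYDSandwich k m α μ S (c ⊗ₜ (x ⊗ₜ (y ⊗ₜ z))) = (α ^ (-2 : ℤ)) y ⊗ₜ
      μ (S ((α ^ (m - 2)) x)) (μ ((α ^ (-2 : ℤ)) c) ((α ^ (m - 4)) z)) := rfl

end Def

variable {k}
variable {H : Type*} [Ring H] [HopfAlgebra k H] {α : H ≃ₗ[k] H}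

lemma homYDSandwich_comp_map_eq_ydSandwich (hα : α ∈ bialgAut k H) {m : ℤ} {β : H →ₐc[k] H}
    (hβ : ∀ a, β a = (α ^ m) a) :
    homYDSandwich k m α ((LinearMap.mul k H).compr₂ α.toLinearMap) (antipode k) ∘ₗ
        map .id (map α.toLinearMap (map (α ^ 2).toLinearMap (α ^ 2).toLinearMap)) =
      ydSandwich β := by
  obtain ⟨f, hf⟩ := hα
  have hmul (a b : H) : α (a * b) = α a * α b := by simp [← hf]
  have hS (a : H) : α (antipode k a) = antipode k (α a) := by
    simpa [hf] using bialgHom_map_antipode (f : H →ₐc[k] H) a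
  have hzpow (i j : ℤ) (a : H) : (α ^ i) ((α ^ j) a) = (α ^ (i + j)) a :=
    congr($((zpow_add α i j).symm) a)
  have hα_zpow (i : ℤ) (a : H) : α ((α ^ i) a) = (α ^ (1 + i)) a := by
    simpa using hzpow 1 i a
  have hzpow_α (i : ℤ) (a : H) : (α ^ i) (α a) = (α ^ (i + 1)) a := by
    simpa using hzpow i 1 a
  ext c x y z
  have h := homYDSandwich_tmul k m α ((LinearMap.mul k H).compr₂ α.toLinearMap) (antipode k) c
    (α x) ((α ^ (2 : ℤ)) y) ((α ^ (2 : ℤ)) z)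
  simp only [LinearMap.compr₂_apply, LinearMap.mul_apply', LinearEquiv.coe_coe, hmul, hS,
    hα_zpow, hzpow_α, hzpow] at h
  ring_nf at h
  simpa [← hβ, ← bialgHom_map_antipode] using! h

lemma homYDEntwining_eq_ydEntwining (hα : α ∈ bialgAut k H) {m : ℤ} {β : H →ₐc[k] H}
    (hβ : ∀ a, β a = (α ^ m) a) :
    homYDEntwining k m α ((LinearMap.mul k H).compr₂ α.toLinearMap)
        (map α.toLinearMap α.toLinearMap ∘ₗ comul) (antipode k) = ydEntwining β := by
  have hcomul : comul ∘ₗ α.toLinearMap = map α.toLinearMap α.toLinearMap ∘ₗ comul (R := k) := by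
    obtain ⟨f, hf⟩ := hα
    have hαf : α.toLinearMap = ((f : H →ₐc[k] H) : H →ₗ[k] H) := by ext; simp [hf]
    rw [hαf]
    exact (CoalgHomClass.map_comp_comul _).symm
  have hcomul₂ : map .id (map α.toLinearMap α.toLinearMap ∘ₗ comul) ∘ₗ
      map α.toLinearMap α.toLinearMap ∘ₗ comul =
      map α.toLinearMap (map (α ^ 2).toLinearMap (α ^ 2).toLinearMap) ∘ₗ
        map .id comul ∘ₗ comul (R := k) := by
    simp only [← LinearMap.comp_assoc, ← map_comp]
    simp only [LinearMap.comp_assoc, hcomul]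
    simp only [← LinearMap.comp_assoc, ← map_comp]
    rfl
  ext c a
  exact congr(homYDSandwich _ _ _ _ _ (c ⊗ₜ $hcomul₂ a)).trans
    congr($(homYDSandwich_comp_map_eq_ydSandwich hα hβ) (c ⊗ₜ map .id comul (comul (R := k) a)))

lemma homYDEntwining_isHomMonoidalEntwining (hα : α ∈ bialgAut k H) (m : ℤ) :
    IsHomMonoidalEntwining k
      α ((LinearMap.mul k H).compr₂ α.toLinearMap) 1 (map α.toLinearMap α.toLinearMap ∘ₗ comul)
      counit
      α ((LinearMap.mul k H).compr₂ α.toLinearMap) 1 (map α.toLinearMap α.toLinearMap ∘ₗ comul)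
      counit
      (homYDEntwining k m α ((LinearMap.mul k H).compr₂ α.toLinearMap)
        (map α.toLinearMap α.toLinearMap ∘ₗ comul) (antipode k)) := by
  obtain ⟨g, hg⟩ := zpow_mem hα m
  rw [homYDEntwining_eq_ydEntwining hα (β := g) hg]
  obtain ⟨f, hf⟩ := hα
  have hαf : α.toLinearMap = ((f : H →ₐc[k] H) : H →ₗ[k] H) := by ext; simp [hf]
  refine (ydEntwining_isHomMonoidalEntwining k (g : H →ₐc[k] H)).twist ?_ fun a b ↦ ?_
  · rw [hαf]
    refine map_comp_ydEntwining (BialgHom.ext fun a ↦ ?_)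
    have : (α ^ m) (α a) = α ((α ^ m) a) := congr($((Commute.self_zpow α m).symm.eq) a)
    simpa [hf, hg] using this
  · simp [← hf]

end HomYDEntwining

section Untwist

variable {k}
variable {H : Type*} [AddCommGroup H] [Module k H] {α : H ≃ₗ[k] H} {μ : H →ₗ[k] H →ₗ[k] H} {e : H}
  {Δ : H →ₗ[k] H ⊗[k] H} {ε : H →ₗ[k] k} {S : H →ₗ[k] H}

lemma IsHomAlgebra.symm_mul (h : IsHomAlgebra k α μ e) (a b : H) :
    α.symm (μ a b) = μ (α.symm a) (α.symm b) := by
  rw [α.symm_apply_eq, h.1, α.apply_symm_apply, α.apply_symm_apply]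

lemma IsHomAlgebra.symm_unit (h : IsHomAlgebra k α μ e) : α.symm e = e := by
  rw [α.symm_apply_eq, h.2.2.1]

lemma IsHomCoalgebra.counit_symm (h : IsHomCoalgebra k α Δ ε) (c : H) : ε (α.symm c) = ε c := by
  rw [← h.2.1, α.apply_symm_apply]

lemma IsHomCoalgebra.comul_symm (h : IsHomCoalgebra k α Δ ε) (c : H) :
    Δ (α.symm c) = map α.symm.toLinearMap α.symm.toLinearMap (Δ c) := by
  nth_rw 2 [← α.apply_symm_apply c]
  rw [h.1]
  exact ((TensorProduct.congr α α).symm_apply_apply _).symm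

lemma IsHomAlgebra.lift_comp_map_symm (h : IsHomAlgebra k α μ e) :
    lift μ ∘ₗ map α.symm.toLinearMap α.symm.toLinearMap = α.symm.toLinearMap ∘ₗ lift μ := by
  ext; simp [h.symm_mul]

lemma IsHomAlgebra.untwist (h : IsHomAlgebra k α μ e) :
    IsHomAlgebra k (.refl k H) (μ.compr₂ α.symm.toLinearMap) e := by
  obtain ⟨-, hassoc, -, hone_mul, hmul_one⟩ := id h
  refine ⟨by simp, fun a b c ↦ ?_, rfl, by simp [hone_mul], by simp [hmul_one]⟩
  simpa [h.symm_mul] using congr(α.symm $(hassoc (α.symm a) (α.symm b) (α.symm c)))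

lemma IsHomCoalgebra.untwist (h : IsHomCoalgebra k α Δ ε) :
    IsHomCoalgebra k (.refl k H) (map α.symm.toLinearMap α.symm.toLinearMap ∘ₗ Δ) ε := by
  obtain ⟨-, -, hassoc, hl, hr⟩ := id h
  set σ : H →ₗ[k] H := α.symm.toLinearMap with hσ
  have hσα : σ ∘ₗ α.toLinearMap = .id := by simp [hσ]
  have hΔ : Δ ∘ₗ σ = map σ σ ∘ₗ Δ := LinearMap.ext h.comul_symm
  have hε : ε ∘ₗ σ = ε := LinearMap.ext h.counit_symm
  refine ⟨by simp, by simp, fun c ↦ ?_, fun c ↦ ?_, fun c ↦ ?_⟩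
  · have h := congr(map (σ ∘ₗ σ) (map (σ ∘ₗ σ) (σ ∘ₗ σ)) $(hassoc c))
    rw [map_map_assoc] at h
    simpa [map_map, hΔ, hσα, LinearMap.comp_assoc, map_comp] using h
  · have hlid : (TensorProduct.lid k H).toLinearMap ∘ₗ map ε σ =
        σ ∘ₗ (TensorProduct.lid k H).toLinearMap ∘ₗ map ε .id := by
      ext; simp
    calc TensorProduct.lid k H (map ε .id ((map σ σ ∘ₗ Δ) c))
      _ = TensorProduct.lid k H (map ε σ (Δ c)) := by
        rw [LinearMap.comp_apply, map_map, hε, LinearMap.id_comp]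
      _ = σ (TensorProduct.lid k H (map ε .id (Δ c))) := congr($hlid (Δ c))
      _ = c := by rw [hl]; exact α.symm_apply_apply c
  · have hrid : (TensorProduct.rid k H).toLinearMap ∘ₗ map σ ε =
        σ ∘ₗ (TensorProduct.rid k H).toLinearMap ∘ₗ map .id ε := by
      ext; simp
    calc TensorProduct.rid k H (map .id ε ((map σ σ ∘ₗ Δ) c))
      _ = TensorProduct.rid k H (map σ ε (Δ c)) := by
        rw [LinearMap.comp_apply, map_map, hε, LinearMap.id_comp]
      _ = σ (TensorProduct.rid k H (map .id ε (Δ c))) := congr($hrid (Δ c))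
      _ = c := by rw [hr]; exact α.symm_apply_apply c

lemma IsHomBialgebra.untwist (h : IsHomBialgebra k α μ e Δ ε) :
    IsHomBialgebra k (.refl k H) (μ.compr₂ α.symm.toLinearMap) e
      (map α.symm.toLinearMap α.symm.toLinearMap ∘ₗ Δ) ε := by
  obtain ⟨halg, hcoalg, hmul, hone, hεmul, hεone⟩ := h
  refine ⟨halg.untwist, hcoalg.untwist, fun a b ↦ ?_, by simp [hone, halg.symm_unit],
    by simp [hcoalg.counit_symm, hεmul], hεone⟩
  have hα := congr($(tensorTensorTensorComm_comp_map k α.symm.toLinearMap α.symm.toLinearMap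
    α.symm.toLinearMap α.symm.toLinearMap) (Δ a ⊗ₜ Δ b))
  simp only [LinearMap.comp_apply, LinearEquiv.coe_coe, map_tmul] at hα
  simp [hα, hcoalg.comul_symm, hmul, map_map, lift_compr₂, LinearMap.comp_assoc,
    halg.lift_comp_map_symm]

lemma IsHomHopf.untwist (h : IsHomHopf k α μ e Δ ε S) :
    IsHomHopf k (.refl k H) (μ.compr₂ α.symm.toLinearMap) e
      (map α.symm.toLinearMap α.symm.toLinearMap ∘ₗ Δ) ε S := by
  obtain ⟨hbialg, hS, hl, hr⟩ := h
  set σ : H →ₗ[k] H := α.symm.toLinearMap with hσ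
  have hSσ : S ∘ₗ σ = σ ∘ₗ S := by
    ext c
    exact α.injective (by simp [hσ, ← hS])
  have hlift (f g : H →ₗ[k] H) (hf : f ∘ₗ σ = σ ∘ₗ f) (hg : g ∘ₗ σ = σ ∘ₗ g) (c : H)
      (hc : lift μ (map f g (Δ c)) = ε c • e) :
      lift (μ.compr₂ σ) (map f g ((map σ σ ∘ₗ Δ) c)) = ε c • e := by
    have hmap : (lift μ ∘ₗ map f g) ∘ₗ map σ σ = σ ∘ₗ lift μ ∘ₗ map f g := by
      rw [LinearMap.comp_assoc, ← map_comp, hf, hg, map_comp, ← LinearMap.comp_assoc,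
        hbialg.1.lift_comp_map_symm, LinearMap.comp_assoc]
    calc lift (μ.compr₂ σ) (map f g ((map σ σ ∘ₗ Δ) c))
      _ = σ (σ (lift μ (map f g (Δ c)))) := by
        rw [lift_compr₂]; exact congr(σ ($hmap (Δ c)))
      _ = ε c • e := by
        simp [hc, hσ, hbialg.1.symm_unit]
  exact ⟨hbialg.untwist, by simp, fun c ↦ hlift S .id hSσ rfl c (hl c),
    fun c ↦ hlift .id S rfl hSσ c (hr c)⟩

end Untwist

section Structures

variable {k}
variable {H : Type*} [AddCommGroup H] [Module k H] {μ : H →ₗ[k] H →ₗ[k] H} {e : H}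
  {Δ : H →ₗ[k] H ⊗[k] H} {ε : H →ₗ[k] k} {S : H →ₗ[k] H}

/-- The ring structure carried by a Hom-algebra whose structure map is the identity. -/
abbrev IsHomAlgebra.ring (h : IsHomAlgebra k (.refl k H) μ e) : Ring H where
  __ := (inferInstance : AddCommGroup H)
  mul a b := μ a b
  one := e
  left_distrib a b c := map_add (μ a) b c
  right_distrib a b c := by
    change μ (a + b) c = μ a c + μ b c
    simp
  zero_mul a := by
    change μ 0 a = 0
    simp
  mul_zero a := map_zero (μ a)
  mul_assoc a b c := (h.2.1 a b c).symm
  one_mul := h.2.2.2.1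
  mul_one := h.2.2.2.2

/-- The algebra structure carried by a Hom-algebra whose structure map is the identity. -/
abbrev IsHomAlgebra.algebra (h : IsHomAlgebra k (.refl k H) μ e) :
    letI := h.ring
    Algebra k H :=
  letI := h.ring
  .ofModule (fun r a b ↦ congr($(map_smul μ r a) b)) (fun r a b ↦ map_smul (μ a) r b)

/-- The coalgebra structure carried by a Hom-coalgebra whose structure map is the identity. -/
abbrev IsHomCoalgebra.coalgebra (h : IsHomCoalgebra k (.refl k H) Δ ε) : Coalgebra k H where
  comul := Δ
  counit := ε
  coassoc := LinearMap.ext fun c ↦ (h.2.2.1 c).symm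
  rTensor_counit_comp_comul := LinearMap.ext fun c ↦
    (TensorProduct.lid k H).injective <| (h.2.2.2.1 c).trans (one_smul k c).symm
  lTensor_counit_comp_comul := LinearMap.ext fun c ↦
    (TensorProduct.rid k H).injective <| (h.2.2.2.2 c).trans (one_smul k c).symm

/-- The bialgebra structure carried by a Hom-bialgebra whose structure map is the identity. -/
abbrev IsHomBialgebra.bialgebra (h : IsHomBialgebra k (.refl k H) μ e Δ ε) :
    letI := h.1.ring
    Bialgebra k H :=
  letI := h.1.ring
  letI := h.1.algebra
  letI := h.2.1.coalgebra
  have hmul : map (lift μ) (lift μ) ∘ₗ (tensorTensorTensorComm k H H H H).toLinearMap =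
      LinearMap.mul' k (H ⊗[k] H) := by
    ext a b c d
    exact (Algebra.TensorProduct.tmul_mul_tmul (R := k) a c b d).symm
  .mk' k H h.2.2.2.2.2 (h.2.2.2.2.1 _ _) h.2.2.2.1
    (fun {a b} ↦ (h.2.2.1 a b).trans congr($hmul (Δ a ⊗ₜ Δ b)))

/-- The Hopf algebra structure carried by a Hom-Hopf algebra whose structure map is the
identity. -/
abbrev IsHomHopf.hopfAlgebra (h : IsHomHopf k (.refl k H) μ e Δ ε S) :
    letI := h.1.1.ring
    HopfAlgebra k H :=
  letI := h.1.1.ring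
  { h.1.bialgebra with
    antipode := S
    mul_antipode_rTensor_comul := LinearMap.ext h.2.2.1
    mul_antipode_lTensor_comul := LinearMap.ext h.2.2.2 }

end Structures

/-- for a Hom-Hopf algebra `H` and `m ∈ ℤ`, the map
`Φ(c ⊗ a) = α⁻²((a₂)₁) ⊗ S(α^{m-2}(a₁)) (α⁻²(c) α^{m-4}((a₂)₂))` is a
Hom-monoidal entwining datum. -/
theorem hopf_yd_homMonoidalEntwining
    {H : Type*} [AddCommGroup H] [Module k H] (m : ℤ)
    (αH : H ≃ₗ[k] H) (μ : H →ₗ[k] H →ₗ[k] H) (e : H)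
    (Δ : H →ₗ[k] H ⊗[k] H) (ε : H →ₗ[k] k) (S : H →ₗ[k] H)
    (hH : IsHomHopf k αH μ e Δ ε S) :
    IsHomMonoidalEntwining k αH μ e Δ ε αH μ e Δ ε
      (TensorProduct.map ((αH ^ (-2 : ℤ)).toLinearMap)
          (TensorProduct.lift μ ∘ₗ
            TensorProduct.map (S ∘ₗ (αH ^ (m - 2)).toLinearMap)
              (TensorProduct.lift μ ∘ₗ
                TensorProduct.map ((αH ^ (-2 : ℤ)).toLinearMap)
                  ((αH ^ (m - 4)).toLinearMap)))
        ∘ₗ (TensorProduct.leftComm k H H (H ⊗[k] H)).toLinearMap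
        ∘ₗ TensorProduct.map (LinearMap.id : H →ₗ[k] H)
            (TensorProduct.leftComm k H H H).toLinearMap
        ∘ₗ (TensorProduct.leftComm k H H (H ⊗[k] H)).toLinearMap
        ∘ₗ TensorProduct.map (LinearMap.id : H →ₗ[k] H)
            (TensorProduct.map (LinearMap.id : H →ₗ[k] H) Δ)
        ∘ₗ TensorProduct.map (LinearMap.id : H →ₗ[k] H) Δ) := by
  let _ : Ring H := hH.untwist.1.1.ring
  let _ : HopfAlgebra k H := hH.untwist.hopfAlgebra
  have hμ : (LinearMap.mul k H).compr₂ αH.toLinearMap = μ := by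
    ext a b
    exact αH.apply_symm_apply (μ a b)
  have hΔ : map αH.toLinearMap αH.toLinearMap ∘ₗ Coalgebra.comul = Δ :=
    LinearMap.ext fun a ↦ (TensorProduct.congr αH αH).apply_symm_apply (Δ a)
  have hα : αH ∈ bialgAut k H := by
    refine mem_bialgAut hH.1.1.2.2.1 (fun a b ↦ ?_) hH.1.2.1.2.1 fun a ↦ ?_
    · exact (αH.apply_symm_apply _).trans (αH.eq_symm_apply.2 (hH.1.1.1 a b))
    · exact congr($hΔ a).trans <|
        (TensorProduct.congr αH αH).eq_symm_apply.2 (hH.1.2.1.1 a).symm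
  have := homYDEntwining_isHomMonoidalEntwining hα m
  rw [hμ, hΔ] at this
  exact this
end
end

section
/- Let (H, α_H, S) be a Hom-Hopf algebra over a field k with α_H bijective, let i, j, p ∈ ℤ, and let (U,α_U), (V,α_V), (W,α_W) be p-th right-right Yetter-Drinfeld modules over H. Define τ_{X,Y} : X⊗Y → Y⊗X by τ_{X,Y}(x⊗y) = α_Y^{j-i-1}(y₍₀₎) ⊗ α_X^{i-j-1}(x)·α_H^{-p}(y₍₁₎), and define the associativity constraint a_{X,Y,Z} : (X⊗Y)⊗Z → X⊗(Y⊗Z) by a_{X,Y,Z}((x⊗y)⊗z) = α_X^{i+1}(x) ⊗ (y ⊗ α_Z^{-j-1}(z)). Then the Hom-Yang-Baxter equation holds as an equality of linear maps (U⊗V)⊗W → W⊗(V⊗U): (id_W⊗τ_{U,V}) ∘ a_{W,U,V} ∘ (τ_{U,W}⊗id_V) ∘ a_{U,W,V}^{-1} ∘ (id_U⊗τ_{V,W}) ∘ a_{U,V,W} = a_{W,V,U} ∘ (τ_{V,W}⊗id_U) ∘ a_{V,W,U}^{-1} ∘ (id_V⊗τ_{U,W}) ∘ a_{V,U,W} ∘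 (τ_{U,V}⊗id_W). -/
open TensorProduct BigOperators

noncomputable section

variable (k : Type*) [Field k]

/-!
Replacing the action by `α_U⁻¹(u·h)` and the coaction by `α_U⁻¹(u₀) ⊗ α_H^{1-p}(u₁)` turns a
`p`-th Yetter-Drinfeld module over the Hom-Hopf algebra `H` into an ordinary Yetter-Drinfeld
module over an ordinary Hopf algebra. There the braiding `x ⊗ y ↦ y₀ ⊗ x·y₁` satisfies the
Yang-Baxter equation: by coassociativity, braiding `U ⊗ V` past `W` amounts to braiding `V` and
then `U` past `W`, so the equation says that braiding past `W` is natural in the `H`-linear map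
`c_{U,V}`. The map `τ` and the Hom-associator differ from this braiding and the ordinary
associator by powers of the structure maps only. Since these powers commute with the braiding, an
automorphism of `(U ⊗ V) ⊗ W` built from them carries one equation to the other.
-/

open LinearMap (lTensor rTensor)

section YangBaxter

variable {R : Type*} [CommSemiring R]
variable {H H' M U V W X X' Y Y' : Type*}
variable [AddCommMonoid H] [Module R H] [AddCommMonoid M] [Module R M]
variable [AddCommMonoid U] [Module R U] [AddCommMonoid V] [Module R V]
variable [AddCommMonoid W] [Module R W] [AddCommMonoid X] [Module R X]
variable [AddCommMonoid Y] [Module R Y] [AddCommMonoid H'] [Module R H']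
variable [AddCommMonoid X'] [Module R X'] [AddCommMonoid Y'] [Module R Y']

/-- The Yang-Baxter equation for three braidings between distinct modules. -/
def YangBaxter (cUV : U ⊗[R] V →ₗ[R] V ⊗[R] U) (cUW : U ⊗[R] W →ₗ[R] W ⊗[R] U)
    (cVW : V ⊗[R] W →ₗ[R] W ⊗[R] V) : Prop :=
  lTensor W cUV ∘ₗ (TensorProduct.assoc R W U V).toLinearMap
      ∘ₗ rTensor V cUW ∘ₗ (TensorProduct.assoc R U W V).symm.toLinearMap
      ∘ₗ lTensor U cVW ∘ₗ (TensorProduct.assoc R U V W).toLinearMap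
    = (TensorProduct.assoc R W V U).toLinearMap ∘ₗ rTensor U cVW
      ∘ₗ (TensorProduct.assoc R V W U).symm.toLinearMap ∘ₗ lTensor V cUW
      ∘ₗ (TensorProduct.assoc R V U W).toLinearMap ∘ₗ rTensor W cUV

/-- The map `x ⊗ y ↦ y₀ ⊗ x·y₁`, the braiding of classical Yetter-Drinfeld modules. -/
def braiding (act : X →ₗ[R] H →ₗ[R] X) (ρ : Y →ₗ[R] Y ⊗[R] H) : X ⊗[R] Y →ₗ[R] Y ⊗[R] X :=
  TensorProduct.lift ((LinearMap.lTensorHom Y ∘ₗ act).compl₂ ρ)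

lemma braiding_tmul (act : X →ₗ[R] H →ₗ[R] X) (ρ : Y →ₗ[R] Y ⊗[R] H) (x : X) (y : Y) :
    braiding act ρ (x ⊗ₜ y) = lTensor Y (act x) (ρ y) := rfl

/-- The diagonal action `(x ⊗ y)·h = x·h₁ ⊗ y·h₂` on a tensor product of modules. -/
def tensorAct (Δ : H →ₗ[R] H ⊗[R] H) (actX : X →ₗ[R] H →ₗ[R] X) (actY : Y →ₗ[R] H →ₗ[R] Y) :
    X ⊗[R] Y →ₗ[R] H →ₗ[R] X ⊗[R] Y :=
  (TensorProduct.map₂ actX actY).compl₂ Δ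

lemma tensorAct_tmul (Δ : H →ₗ[R] H ⊗[R] H) (actX : X →ₗ[R] H →ₗ[R] X)
    (actY : Y →ₗ[R] H →ₗ[R] Y) (x : X) (y : Y) (h : H) :
    tensorAct Δ actX actY (x ⊗ₜ y) h = TensorProduct.map (actX x) (actY y) (Δ h) := rfl

lemma map_tensorAct (Δ : H →ₗ[R] H ⊗[R] H) (actX : X →ₗ[R] H →ₗ[R] X)
    (actY : Y →ₗ[R] H →ₗ[R] Y) (f : U →ₗ[R] V) (t : X ⊗[R] Y) (s : U ⊗[R] H) :
    TensorProduct.map f (tensorAct Δ actX actY t) s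
      = TensorProduct.map f (TensorProduct.map₂ actX actY t) (lTensor U Δ s) :=
  (LinearMap.map_lTensor ..).symm

lemma lTensor_tensorAct {Δ : H →ₗ[R] H ⊗[R] H} (actV : V →ₗ[R] H →ₗ[R] V)
    {actX : X →ₗ[R] H →ₗ[R] X} {actY : Y →ₗ[R] H →ₗ[R] Y} {f : X →ₗ[R] Y}
    (hf : ∀ x h, f (actX x h) = actY (f x) h) (t : V ⊗[R] X) (h : H) :
    lTensor V f (tensorAct Δ actV actX t h) = tensorAct Δ actV actY (lTensor V f t) h := by
  induction t with
  | zero => simp only [map_zero, LinearMap.zero_apply]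
  | add s t hs ht => simp only [map_add, LinearMap.add_apply, hs, ht]
  | tmul v x =>
    have hfx : f ∘ₗ actX x = actY (f x) := LinearMap.ext (hf x)
    rw [LinearMap.lTensor_tmul, tensorAct_tmul, tensorAct_tmul, LinearMap.lTensor_map, hfx]

lemma map_comp_braiding {act : X →ₗ[R] H →ₗ[R] X} {act' : X' →ₗ[R] H' →ₗ[R] X'}
    {ρ : Y →ₗ[R] Y ⊗[R] H} {ρ' : Y' →ₗ[R] Y' ⊗[R] H'} {f : X →ₗ[R] X'} {φ : H →ₗ[R] H'}
    {g : Y →ₗ[R] Y'} (hf : ∀ x h, f (act x h) = act' (f x) (φ h))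
    (hg : ∀ y, ρ' (g y) = TensorProduct.map g φ (ρ y)) :
    TensorProduct.map g f ∘ₗ braiding act ρ = braiding act' ρ' ∘ₗ TensorProduct.map f g := by
  ext x y
  have hfx : f ∘ₗ act x = act' (f x) ∘ₗ φ := LinearMap.ext (hf x)
  change TensorProduct.map g f (lTensor Y (act x) (ρ y)) = lTensor Y' (act' (f x)) (ρ' (g y))
  rw [hg, LinearMap.map_lTensor, LinearMap.lTensor_map, hfx]

lemma lTensor_comp_braiding {actX : X →ₗ[R] H →ₗ[R] X} {actY : Y →ₗ[R] H →ₗ[R] Y}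
    (ρW : W →ₗ[R] W ⊗[R] H) {f : X →ₗ[R] Y} (hf : ∀ x h, f (actX x h) = actY (f x) h) :
    lTensor W f ∘ₗ braiding actX ρW = braiding actY ρW ∘ₗ rTensor W f :=
  map_comp_braiding (φ := LinearMap.id) hf fun _ => (LinearMap.lTensor_id_apply ..).symm

lemma braiding_tensorAct {Δ : H →ₗ[R] H ⊗[R] H} (actU : U →ₗ[R] H →ₗ[R] U)
    (actV : V →ₗ[R] H →ₗ[R] V) {ρW : W →ₗ[R] W ⊗[R] H}
    (coassoc : ∀ w, lTensor W Δ (ρW w) = TensorProduct.assoc R W H H (rTensor H ρW (ρW w))) :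
    braiding (tensorAct Δ actU actV) ρW
      = (TensorProduct.assoc R W U V).toLinearMap ∘ₗ rTensor V (braiding actU ρW)
        ∘ₗ (TensorProduct.assoc R U W V).symm.toLinearMap
        ∘ₗ lTensor U (braiding actV ρW) ∘ₗ (TensorProduct.assoc R U V W).toLinearMap := by
  refine TensorProduct.ext_threefold fun u v w => ?_
  have braid_legs : ∀ t : W ⊗[R] H,
      lTensor W (TensorProduct.map (actU u) (actV v))
          (TensorProduct.assoc R W H H (rTensor H ρW t))
        = TensorProduct.assoc R W U V (rTensor V (braiding actU ρW)
          ((TensorProduct.assoc R U W V).symm (u ⊗ₜ lTensor W (actV v) t))) := by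
    intro t
    induction t with
    | zero => simp only [map_zero, TensorProduct.tmul_zero]
    | add s t hs ht => simp only [map_add, TensorProduct.tmul_add, hs, ht]
    | tmul w h =>
      simp only [LinearMap.rTensor_tmul, LinearMap.lTensor_tmul, TensorProduct.assoc_symm_tmul,
        braiding_tmul]
      exact TensorProduct.map_map_assoc LinearMap.id (actU u) (actV v) (ρW w ⊗ₜ h)
  calc lTensor W (TensorProduct.map (actU u) (actV v) ∘ₗ Δ) (ρW w)
      = lTensor W (TensorProduct.map (actU u) (actV v)) (lTensor W Δ (ρW w)) :=
        LinearMap.lTensor_comp_apply ..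
    _ = _ := by rw [coassoc, braid_legs]; rfl

/-- The Yetter-Drinfeld compatibility `(v·h₂)₀ ⊗ h₁(v·h₂)₁ = v₀·h₁ ⊗ v₁h₂`, which makes no
reference to an antipode. -/
def IsCrossed (μ : H →ₗ[R] H →ₗ[R] H) (Δ : H →ₗ[R] H ⊗[R] H) (act : V →ₗ[R] H →ₗ[R] V)
    (ρ : V →ₗ[R] V ⊗[R] H) : Prop :=
  ∀ v h, braiding μ ρ (lTensor H (act v) (Δ h)) = tensorAct Δ act μ (ρ v) h

lemma IsCrossed.braiding_equivariant {μ : H →ₗ[R] H →ₗ[R] H} {Δ : H →ₗ[R] H ⊗[R] H}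
    {actU : U →ₗ[R] H →ₗ[R] U} {actV : V →ₗ[R] H →ₗ[R] V} {ρV : V →ₗ[R] V ⊗[R] H}
    (hV : IsCrossed μ Δ actV ρV) (hU : ∀ u a b, actU (actU u a) b = actU u (μ a b))
    (t : U ⊗[R] V) (h : H) :
    braiding actU ρV (tensorAct Δ actU actV t h)
      = tensorAct Δ actV actU (braiding actU ρV t) h := by
  induction t with
  | zero => simp only [map_zero, LinearMap.zero_apply]
  | add s t hs ht => simp only [map_add, LinearMap.add_apply, hs, ht]
  | tmul u v =>
    have naturality :
        lTensor V (actU u) ∘ₗ braiding μ ρV = braiding actU ρV ∘ₗ rTensor V (actU u) :=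
      lTensor_comp_braiding ρV fun a b => (hU u a b).symm
    calc braiding actU ρV (TensorProduct.map (actU u) (actV v) (Δ h))
        = braiding actU ρV (rTensor V (actU u) (lTensor H (actV v) (Δ h))) := by
          rw [← LinearMap.comp_apply (rTensor _ _), LinearMap.rTensor_comp_lTensor]
      _ = lTensor V (actU u) (braiding μ ρV (lTensor H (actV v) (Δ h))) :=
          (LinearMap.congr_fun naturality _).symm
      _ = lTensor V (actU u) (tensorAct Δ actV μ (ρV v) h) := by rw [hV]
      _ = tensorAct Δ actV actU (lTensor V (actU u) (ρV v)) h :=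
          lTensor_tensorAct actV (fun a b => (hU u a b).symm) _ _

theorem IsCrossed.yangBaxter_braiding {μ : H →ₗ[R] H →ₗ[R] H} {Δ : H →ₗ[R] H ⊗[R] H}
    {actU : U →ₗ[R] H →ₗ[R] U} {actV : V →ₗ[R] H →ₗ[R] V} {ρV : V →ₗ[R] V ⊗[R] H}
    {ρW : W →ₗ[R] W ⊗[R] H} (hV : IsCrossed μ Δ actV ρV)
    (hU : ∀ u a b, actU (actU u a) b = actU u (μ a b))
    (hW : ∀ w, lTensor W Δ (ρW w) = TensorProduct.assoc R W H H (rTensor H ρW (ρW w))) :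
    YangBaxter (braiding actU ρV) (braiding actU ρW) (braiding actV ρW) := by
  have naturality := lTensor_comp_braiding ρW (hV.braiding_equivariant hU)
  rw [braiding_tensorAct actU actV hW, braiding_tensorAct actV actU hW] at naturality
  exact naturality

lemma lift_lTensor_antipode_cancel {μ : H →ₗ[R] H →ₗ[R] H} {e : H} {Δ : H →ₗ[R] H ⊗[R] H}
    {ε : H →ₗ[R] R} {S : H →ₗ[R] H} {L : H →ₗ[R] M →ₗ[R] M}
    (coassoc : ∀ h, lTensor H Δ (Δ h) = TensorProduct.assoc R H H H (rTensor H Δ (Δ h)))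
    (counit : ∀ h, TensorProduct.lid R H (rTensor H ε (Δ h)) = h)
    (antipode : ∀ h, TensorProduct.lift μ (lTensor H S (Δ h)) = ε h • e)
    (mul_act : ∀ a b m, L (μ a b) m = L a (L b m)) (one_act : ∀ m, L e m = m)
    (g : H →ₗ[R] M) (h : H) :
    TensorProduct.lift L (lTensor H (TensorProduct.lift L ∘ₗ TensorProduct.map S g ∘ₗ Δ) (Δ h))
      = g h := by
  have act_assoc : ∀ (s : H ⊗[R] H) (b : H),
      TensorProduct.lift L (lTensor H (TensorProduct.lift L ∘ₗ TensorProduct.map S g)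
          (TensorProduct.assoc R H H H (s ⊗ₜ b)))
        = L (TensorProduct.lift μ (lTensor H S s)) (g b) := by
    intro s b
    induction s with
    | zero => simp only [TensorProduct.zero_tmul, map_zero, LinearMap.zero_apply]
    | add s t hs ht => simp only [TensorProduct.add_tmul, map_add, LinearMap.add_apply, hs, ht]
    | tmul a a' => exact (mul_act a (S a') (g b)).symm
  have cancel : ∀ t : H ⊗[R] H,
      TensorProduct.lift L (lTensor H (TensorProduct.lift L ∘ₗ TensorProduct.map S g)
          (TensorProduct.assoc R H H H (rTensor H Δ t)))
        = g (TensorProduct.lid R H (rTensor H ε t)) := by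
    intro t
    induction t with
    | zero => simp only [map_zero]
    | add s t hs ht => simp only [map_add, hs, ht]
    | tmul a b =>
      rw [LinearMap.rTensor_tmul, act_assoc, antipode, map_smul, LinearMap.smul_apply, one_act,
        LinearMap.rTensor_tmul, TensorProduct.lid_tmul, map_smul]
  rw [← LinearMap.comp_assoc, LinearMap.lTensor_comp_apply, coassoc, cancel, counit]

lemma isCrossed_of_antipode {μ : H →ₗ[R] H →ₗ[R] H} {e : H} {Δ : H →ₗ[R] H ⊗[R] H}
    {ε : H →ₗ[R] R} {S : H →ₗ[R] H} {act : V →ₗ[R] H →ₗ[R] V} {ρ : V →ₗ[R] V ⊗[R] H}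
    (mul_assoc : ∀ a b c, μ (μ a b) c = μ a (μ b c)) (one_mul : ∀ a, μ e a = a)
    (coassoc : ∀ h, lTensor H Δ (Δ h) = TensorProduct.assoc R H H H (rTensor H Δ (Δ h)))
    (counit : ∀ h, TensorProduct.lid R H (rTensor H ε (Δ h)) = h)
    (antipode : ∀ h, TensorProduct.lift μ (lTensor H S (Δ h)) = ε h • e)
    (yd : ∀ v h, ρ (act v h) = TensorProduct.lift (LinearMap.lTensorHom V ∘ₗ μ)
      (TensorProduct.map S (tensorAct Δ act μ (ρ v)) (Δ h))) :
    IsCrossed μ Δ act ρ := by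
  intro v h
  set L : H →ₗ[R] V ⊗[R] H →ₗ[R] V ⊗[R] H := LinearMap.lTensorHom V ∘ₗ μ
  set D := tensorAct Δ act μ (ρ v)
  have mul_act (a b : H) (m : V ⊗[R] H) : L (μ a b) m = L a (L b m) := by
    have : μ (μ a b) = μ a ∘ₗ μ b := LinearMap.ext (mul_assoc a b)
    change lTensor V (μ (μ a b)) m = _
    rw [this, LinearMap.lTensor_comp_apply]; rfl
  have one_act (m : V ⊗[R] H) : L e m = m := by
    have : μ e = LinearMap.id := LinearMap.ext one_mul
    change lTensor V (μ e) m = m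
    rw [this, LinearMap.lTensor_id_apply]
  have coaction_act : ρ ∘ₗ act v = TensorProduct.lift L ∘ₗ TensorProduct.map S D ∘ₗ Δ :=
    LinearMap.ext (yd v)
  have braiding_eq : braiding μ ρ ∘ₗ lTensor H (act v)
      = TensorProduct.lift L ∘ₗ lTensor H (ρ ∘ₗ act v) := TensorProduct.ext' fun _ _ => rfl
  calc braiding μ ρ (lTensor H (act v) (Δ h))
      = TensorProduct.lift L (lTensor H (ρ ∘ₗ act v) (Δ h)) := LinearMap.congr_fun braiding_eq _
    _ = D h := by
      rw [coaction_act, lift_lTensor_antipode_cancel coassoc counit antipode mul_act one_act]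

end YangBaxter

section Zpow

variable {R M N : Type*} [Semiring R] [AddCommMonoid M] [Module R M] [AddCommMonoid N] [Module R N]

lemma zpow_apply_zpow_apply (α : M ≃ₗ[R] M) (m n : ℤ) (x : M) :
    (α ^ m) ((α ^ n) x) = (α ^ (m + n)) x := by
  rw [zpow_add]; rfl

lemma zpow_apply_self (α : M ≃ₗ[R] M) (n : ℤ) (x : M) : (α ^ n) (α x) = (α ^ (n + 1)) x := by
  rw [zpow_add_one]; rfl

lemma zpow_comp_zpow (α : M ≃ₗ[R] M) (m n : ℤ) :
    (α ^ m).toLinearMap ∘ₗ (α ^ n).toLinearMap = (α ^ (m + n)).toLinearMap :=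
  LinearMap.ext (zpow_apply_zpow_apply α m n)

lemma zpow_comp_self (α : M ≃ₗ[R] M) (n : ℤ) :
    (α ^ n).toLinearMap ∘ₗ α.toLinearMap = (α ^ (n + 1)).toLinearMap :=
  LinearMap.ext (zpow_apply_self α n)

lemma self_comp_zpow (α : M ≃ₗ[R] M) (n : ℤ) :
    α.toLinearMap ∘ₗ (α ^ n).toLinearMap = (α ^ n).toLinearMap ∘ₗ α.toLinearMap :=
  congrArg LinearEquiv.toLinearMap (Commute.self_zpow α n).eq

lemma apply_zpow_apply {α : M ≃ₗ[R] M} {β : N ≃ₗ[R] N} {f : M →ₗ[R] N}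
    (hf : ∀ x, f (α x) = β (f x)) (n : ℤ) (x : M) : f ((α ^ n) x) = (β ^ n) (f x) := by
  have hf_symm (x : M) : f (α⁻¹ x) = β⁻¹ (f x) :=
    β.eq_symm_apply.2 ((hf _).symm.trans (congrArg f (α.apply_symm_apply x)))
  induction n generalizing x with
  | zero => rfl
  | succ n ih =>
    rw [zpow_add_one, zpow_add_one, LinearEquiv.mul_apply, LinearEquiv.mul_apply, ih, hf]
  | pred n ih =>
    rw [zpow_sub_one, zpow_sub_one, LinearEquiv.mul_apply, LinearEquiv.mul_apply, ih, hf_symm]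

end Zpow

section Untwisting

variable {k}
variable {H U V : Type*}
variable [AddCommGroup H] [Module k H] [AddCommGroup U] [Module k U]
variable [AddCommGroup V] [Module k V]

/-- The untwisted action `α_U⁻¹(u·h)` of a Hom-module, an ordinary action of the untwisted algebra.
With `U = H` it is the untwisted multiplication. -/
def untwistAct (αU : U ≃ₗ[k] U) (act : U →ₗ[k] H →ₗ[k] U) : U →ₗ[k] H →ₗ[k] U :=
  act.compr₂ (αU ^ (-1 : ℤ)).toLinearMap

/-- The untwisted coaction `α_U⁻¹(u₀) ⊗ α_H^{1-p}(u₁)` of a Hom-comodule, an ordinary coaction of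
the untwisted coalgebra. With `U = H` and `p = 2` it is the untwisted comultiplication. -/
def untwistCoact (p : ℤ) (αH : H ≃ₗ[k] H) (αU : U ≃ₗ[k] U) (ρ : U →ₗ[k] U ⊗[k] H) :
    U →ₗ[k] U ⊗[k] H :=
  TensorProduct.map (αU ^ (-1 : ℤ)).toLinearMap (αH ^ (1 - p)).toLinearMap ∘ₗ ρ

lemma untwistAct_apply (αU : U ≃ₗ[k] U) (act : U →ₗ[k] H →ₗ[k] U) (u : U) (h : H) :
    untwistAct αU act u h = (αU ^ (-1 : ℤ)) (act u h) := rfl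

lemma untwistCoact_apply (p : ℤ) (αH : H ≃ₗ[k] H) (αU : U ≃ₗ[k] U) (ρ : U →ₗ[k] U ⊗[k] H)
    (u : U) : untwistCoact p αH αU ρ u
      = TensorProduct.map (αU ^ (-1 : ℤ)).toLinearMap (αH ^ (1 - p)).toLinearMap (ρ u) := rfl

section Module

variable {αH : H ≃ₗ[k] H} {μ : H →ₗ[k] H →ₗ[k] H} {e : H} {αU : U ≃ₗ[k] U}
  {act : U →ₗ[k] H →ₗ[k] U}

lemma IsHomModule.zpow_act (hU : IsHomModule k αH μ e αU act) (n : ℤ) (u : U) (h : H) :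
    (αU ^ n) (act u h) = act ((αU ^ n) u) ((αH ^ n) h) := by
  have lift_comp_congr : TensorProduct.lift act ∘ₗ (TensorProduct.congr αU αH).toLinearMap
      = αU.toLinearMap ∘ₗ TensorProduct.lift act :=
    TensorProduct.ext' fun u h => (hU.1 u h).symm
  have lift_zpow := apply_zpow_apply (α := TensorProduct.congr αU αH) (β := αU)
    (f := TensorProduct.lift act) (LinearMap.congr_fun lift_comp_congr) n (u ⊗ₜ h)
  rw [TensorProduct.congr_zpow] at lift_zpow
  exact lift_zpow.symm

lemma IsHomModule.map_untwistAct (hU : IsHomModule k αH μ e αU act) (u : U) (h : H) :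
    αU (untwistAct αU act u h) = untwistAct αU act (αU u) (αH h) := by
  rw [untwistAct_apply, untwistAct_apply, ← hU.1]
  exact LinearMap.congr_fun (self_comp_zpow αU (-1)) _

lemma IsHomModule.untwistAct_untwistAct (hU : IsHomModule k αH μ e αU act) (u : U) (a b : H) :
    untwistAct αU act (untwistAct αU act u a) b = untwistAct αU act u (untwistAct αH μ a b) := by
  have hom_assoc := congrArg (αU ^ (-2 : ℤ)) (hU.2.2 u a b)
  simpa only [untwistAct_apply, hU.zpow_act, zpow_apply_self, zpow_apply_zpow_apply,
    Int.reduceAdd, Int.reduceNeg] using hom_assoc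

lemma IsHomAlgebra.isHomModule (hH : IsHomAlgebra k αH μ e) : IsHomModule k αH μ e αH μ :=
  ⟨hH.1, hH.2.2.2.2, fun a b c => (hH.2.1 a b c).symm⟩

lemma IsHomAlgebra.zpow_unit (hH : IsHomAlgebra k αH μ e) (n : ℤ) : (αH ^ n) e = e :=
  (MulAction.stabilizer (H ≃ₗ[k] H) e).zpow_mem hH.2.2.1 n

lemma IsHomAlgebra.untwistAct_unit (hH : IsHomAlgebra k αH μ e) (a : H) :
    untwistAct αH μ e a = a := by
  rw [untwistAct_apply, hH.2.2.2.1, zpow_apply_self, neg_add_cancel, zpow_zero]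
  rfl

end Module

section Comodule

variable {αH : H ≃ₗ[k] H} {Δ : H →ₗ[k] H ⊗[k] H} {ε : H →ₗ[k] k} {αU : U ≃ₗ[k] U}
  {ρ : U →ₗ[k] U ⊗[k] H}

lemma IsHomComodule.untwistCoact_comp_zpow (hU : IsHomComodule k αH Δ ε αU ρ) (p n : ℤ) :
    untwistCoact p αH αU ρ ∘ₗ (αU ^ n).toLinearMap
      = TensorProduct.map (αU ^ (n - 1)).toLinearMap (αH ^ (n + 1 - p)).toLinearMap ∘ₗ ρ := by
  have coact_zpow (u : U) : ρ ((αU ^ n) u)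
      = TensorProduct.map (αU ^ n).toLinearMap (αH ^ n).toLinearMap (ρ u) := by
    have := apply_zpow_apply (β := TensorProduct.congr αU αH) hU.1 n u
    rwa [TensorProduct.congr_zpow] at this
  ext u
  rw [LinearMap.comp_apply, untwistCoact_apply, LinearEquiv.coe_coe, coact_zpow,
    TensorProduct.map_map, zpow_comp_zpow, zpow_comp_zpow, neg_add_eq_sub, sub_add_eq_add_sub,
    add_comm 1 n, LinearMap.comp_apply]

lemma IsHomComodule.untwistCoact_map (hU : IsHomComodule k αH Δ ε αU ρ) (p : ℤ) (u : U) :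
    untwistCoact p αH αU ρ (αU u)
      = TensorProduct.map αU.toLinearMap αH.toLinearMap (untwistCoact p αH αU ρ u) := by
  rw [untwistCoact_apply, untwistCoact_apply, hU.1, TensorProduct.map_map, TensorProduct.map_map,
    self_comp_zpow, self_comp_zpow]

lemma IsHomCoalgebra.isHomComodule (hH : IsHomCoalgebra k αH Δ ε) :
    IsHomComodule k αH Δ ε αH Δ :=
  ⟨hH.1, hH.2.2.1, hH.2.2.2.2⟩

lemma IsHomCoalgebra.lTensor_untwistCoact (hH : IsHomCoalgebra k αH Δ ε) (p : ℤ)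
    (αU : U ≃ₗ[k] U) (ρ : U →ₗ[k] U ⊗[k] H) (u : U) :
    lTensor U (untwistCoact 2 αH αH Δ) (untwistCoact p αH αU ρ u)
      = TensorProduct.map (αU ^ (-1 : ℤ)).toLinearMap
          (TensorProduct.map (αH ^ (-p)).toLinearMap (αH ^ (-p)).toLinearMap)
          (lTensor U Δ (ρ u)) := by
  have exponent₁ : 1 - p - 1 = -p := by ring
  have exponent₂ : 1 - p + 1 - 2 = -p := by ring
  rw [untwistCoact_apply p, LinearMap.lTensor_map, hH.isHomComodule.untwistCoact_comp_zpow,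
    LinearMap.map_lTensor, exponent₁, exponent₂]

lemma IsHomComodule.untwistCoact_coassoc (hU : IsHomComodule k αH Δ ε αU ρ)
    (hH : IsHomCoalgebra k αH Δ ε) (p : ℤ) (u : U) :
    lTensor U (untwistCoact 2 αH αH Δ) (untwistCoact p αH αU ρ u)
      = TensorProduct.assoc k U H H
        (rTensor H (untwistCoact p αH αU ρ) (untwistCoact p αH αU ρ u)) := by
  set β := (αH ^ (-p)).toLinearMap
  have coact_comp : untwistCoact p αH αU ρ ∘ₗ (αU ^ (-1 : ℤ)).toLinearMap
      = TensorProduct.map (αU ^ (-2 : ℤ)).toLinearMap β ∘ₗ ρ := by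
    rw [hU.untwistCoact_comp_zpow, neg_add_cancel, zero_sub]; rfl
  calc lTensor U (untwistCoact 2 αH αH Δ) (untwistCoact p αH αU ρ u)
      = TensorProduct.map (αU ^ (-1 : ℤ)).toLinearMap (TensorProduct.map β β)
          (lTensor U Δ (ρ u)) := hH.lTensor_untwistCoact ..
    _ = TensorProduct.map (αU ^ (-2 : ℤ)).toLinearMap (TensorProduct.map β β)
          (TensorProduct.map αU.toLinearMap Δ (ρ u)) := by
      rw [TensorProduct.map_map, LinearMap.map_lTensor, zpow_comp_self]; rfl
    _ = TensorProduct.assoc k U H H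
          (TensorProduct.map (TensorProduct.map (αU ^ (-2 : ℤ)).toLinearMap β) β
            (TensorProduct.map ρ αH.toLinearMap (ρ u))) := by
      rw [hU.2.1, TensorProduct.map_map_assoc]
    _ = TensorProduct.assoc k U H H
          (rTensor H (untwistCoact p αH αU ρ) (untwistCoact p αH αU ρ u)) := by
      rw [untwistCoact_apply p αH αU ρ u, LinearMap.rTensor_map, coact_comp,
        TensorProduct.map_map, zpow_comp_self, neg_add_eq_sub]

lemma IsHomCoalgebra.counit_untwistCoact (hH : IsHomCoalgebra k αH Δ ε) (h : H) :
    TensorProduct.lid k H (rTensor H ε (untwistCoact 2 αH αH Δ h)) = h := by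
  have ε_zpow : ε ∘ₗ (αH ^ (-1 : ℤ)).toLinearMap = ε := by
    ext h
    have := apply_zpow_apply (β := 1) (f := ε) hH.2.1 (-1) h
    rwa [one_zpow] at this
  have lid_natural (t : k ⊗[k] H) :
      TensorProduct.lid k H (lTensor k (αH ^ (-1 : ℤ)).toLinearMap t)
        = (αH ^ (-1 : ℤ)) (TensorProduct.lid k H t) :=
    LinearMap.congr_fun (TensorProduct.ext' (by intro r x; simp) :
      (TensorProduct.lid k H).toLinearMap ∘ₗ lTensor k (αH ^ (-1 : ℤ)).toLinearMap
        = (αH ^ (-1 : ℤ)).toLinearMap ∘ₗ (TensorProduct.lid k H).toLinearMap) t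
  calc TensorProduct.lid k H (rTensor H ε (untwistCoact 2 αH αH Δ h))
      = TensorProduct.lid k H (lTensor k (αH ^ (-1 : ℤ)).toLinearMap (rTensor H ε (Δ h))) := by
        rw [untwistCoact_apply, LinearMap.rTensor_map, ε_zpow,
          ← LinearMap.comp_apply (lTensor _ _), LinearMap.lTensor_comp_rTensor]
        rfl
    _ = (αH ^ (-1 : ℤ)) (αH h) := by rw [lid_natural, ← hH.2.2.2.1]; rfl
    _ = h := αH.symm_apply_apply h

end Comodule

section YetterDrinfeld

variable {αH : H ≃ₗ[k] H} {μ : H →ₗ[k] H →ₗ[k] H} {e : H} {Δ : H →ₗ[k] H ⊗[k] H}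
  {ε : H →ₗ[k] k} {S : H →ₗ[k] H} {p : ℤ}

lemma untwist_antipode (hA : IsHomAlgebra k αH μ e) (hSα : ∀ h, S (αH h) = αH (S h))
    (hS : ∀ h, TensorProduct.lift μ (lTensor H S (Δ h)) = ε h • e) (h : H) :
    TensorProduct.lift (untwistAct αH μ) (lTensor H S (untwistCoact 2 αH αH Δ h)) = ε h • e := by
  have lift_map : TensorProduct.lift (untwistAct αH μ) ∘ₗ lTensor H S
        ∘ₗ TensorProduct.map (αH ^ (-1 : ℤ)).toLinearMap (αH ^ (-1 : ℤ)).toLinearMap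
      = (αH ^ (-2 : ℤ)).toLinearMap ∘ₗ TensorProduct.lift μ ∘ₗ lTensor H S := by
    ext a b
    change untwistAct αH μ ((αH ^ (-1 : ℤ)) a) (S ((αH ^ (-1 : ℤ)) b)) = (αH ^ (-2 : ℤ)) (μ a (S b))
    simp only [untwistAct_apply, apply_zpow_apply hSα, hA.isHomModule.zpow_act,
      zpow_apply_zpow_apply, Int.reduceAdd, Int.reduceNeg]
  calc TensorProduct.lift (untwistAct αH μ) (lTensor H S (untwistCoact 2 αH αH Δ h))
      = (αH ^ (-2 : ℤ)) (TensorProduct.lift μ (lTensor H S (Δ h))) :=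
        LinearMap.congr_fun lift_map (Δ h)
    _ = ε h • e := by rw [hS, map_smul, hA.zpow_unit]

variable {αV : V ≃ₗ[k] V} {act : V →ₗ[k] H →ₗ[k] V} {ρ : V →ₗ[k] V ⊗[k] H}

lemma IsYetterDrinfeld.untwistCoact_untwistAct
    (hV : IsYetterDrinfeld k αH μ e Δ ε S p αV act ρ) (hA : IsHomAlgebra k αH μ e)
    (hC : IsHomCoalgebra k αH Δ ε) (hSα : ∀ h, S (αH h) = αH (S h)) (v : V) (h : H) :
    untwistCoact p αH αV ρ (untwistAct αV act v h)
      = TensorProduct.lift (LinearMap.lTensorHom V ∘ₗ untwistAct αH μ)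
        (TensorProduct.map S (tensorAct (untwistCoact 2 αH αH Δ) (untwistAct αV act)
          (untwistAct αH μ) (untwistCoact p αH αV ρ v)) (untwistCoact 2 αH αH Δ h)) := by
  refine (LinearMap.congr_fun (hV.2.1.untwistCoact_comp_zpow p (-1)) (act v h)).trans ?_
  rw [map_tensorAct, hC.lTensor_untwistCoact, LinearMap.comp_apply, hV.2.2, untwistCoact_apply]
  change TensorProduct.map _ _ (TensorProduct.map _ _
    (TensorProduct.tensorTensorTensorComm _ _ _ _ _ (TensorProduct.map _ _
      (TensorProduct.tensorTensorTensorComm _ _ _ _ _ (ρ v ⊗ₜ lTensor H Δ (Δ h)))))) = _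
  induction ρ v with
  | zero =>
    simp only [TensorProduct.zero_tmul, map_zero, TensorProduct.map_zero_right,
      LinearMap.zero_apply]
  | add t t' ht ht' =>
    simp only [TensorProduct.add_tmul, map_add, TensorProduct.map_add_right, LinearMap.add_apply,
      ht, ht']
  | tmul v₀ v₁ =>
    induction lTensor H Δ (Δ h) with
    | zero => simp only [TensorProduct.tmul_zero, map_zero]
    | add s s' hs hs' => simp only [TensorProduct.tmul_add, map_add, hs, hs']
    | tmul a s =>
      induction s with
      | zero => simp only [TensorProduct.tmul_zero, map_zero]
      | add s s' hs hs' => simp only [TensorProduct.tmul_add, map_add, hs, hs']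
      | tmul b c =>
        have module_leg : (αV ^ (-1 - 1 : ℤ)) (act v₀ ((αH ^ (-1 : ℤ)) b))
            = untwistAct αV act ((αV ^ (-1 : ℤ)) v₀) ((αH ^ (-2 : ℤ)) b) := by
          simp only [untwistAct_apply, hV.1.zpow_act, zpow_apply_zpow_apply, Int.reduceAdd,
            Int.reduceSub, Int.reduceNeg]
        have algebra_leg : (αH ^ (-1 + 1 - p))
              (μ (S ((αH ^ (p - 2)) a)) (μ ((αH ^ (-1 : ℤ)) v₁) ((αH ^ (p - 4)) c)))
            = untwistAct αH μ (S ((αH ^ (-1 : ℤ)) a))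
                (untwistAct αH μ ((αH ^ (1 - p)) v₁) ((αH ^ (-2 : ℤ)) c)) := by
          simp only [untwistAct_apply, hA.isHomModule.zpow_act, apply_zpow_apply hSα,
            zpow_apply_zpow_apply]
          ring_nf
        exact congrArg₂ (· ⊗ₜ[k] ·) module_leg algebra_leg

lemma IsYetterDrinfeld.isCrossed (hV : IsYetterDrinfeld k αH μ e Δ ε S p αV act ρ)
    (hA : IsHomAlgebra k αH μ e) (hC : IsHomCoalgebra k αH Δ ε)
    (hSα : ∀ h, S (αH h) = αH (S h))
    (hS : ∀ h, TensorProduct.lift μ (lTensor H S (Δ h)) = ε h • e) :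
    IsCrossed (untwistAct αH μ) (untwistCoact 2 αH αH Δ) (untwistAct αV act)
      (untwistCoact p αH αV ρ) :=
  isCrossed_of_antipode hA.isHomModule.untwistAct_untwistAct hA.untwistAct_unit
    (hC.isHomComodule.untwistCoact_coassoc hC 2) hC.counit_untwistCoact
    (untwist_antipode hA hSα hS) (hV.untwistCoact_untwistAct hA hC hSα)

end YetterDrinfeld

end Untwisting

section Gauge

variable {k}
variable {H U V W X Y Z : Type*}
variable [AddCommGroup H] [Module k H] [AddCommGroup U] [Module k U]
variable [AddCommGroup V] [Module k V] [AddCommGroup W] [Module k W]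
variable [AddCommGroup X] [Module k X] [AddCommGroup Y] [Module k Y]
variable [AddCommGroup Z] [Module k Z]

/-- The Hom-Yang-Baxter equation: the Yang-Baxter equation with the associator `homAssoc k i j` in
place of the ordinary one. -/
def HomYangBaxter (i j : ℤ) (αU : U ≃ₗ[k] U) (αV : V ≃ₗ[k] V) (αW : W ≃ₗ[k] W)
    (τUV : U ⊗[k] V →ₗ[k] V ⊗[k] U) (τUW : U ⊗[k] W →ₗ[k] W ⊗[k] U)
    (τVW : V ⊗[k] W →ₗ[k] W ⊗[k] V) : Prop :=
  lTensor W τUV ∘ₗ (homAssoc k i j (Y := U) αW αV).toLinearMap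
      ∘ₗ rTensor V τUW ∘ₗ (homAssoc k i j (Y := W) αU αV).symm.toLinearMap
      ∘ₗ lTensor U τVW ∘ₗ (homAssoc k i j (Y := V) αU αW).toLinearMap
    = (homAssoc k i j (Y := V) αW αU).toLinearMap ∘ₗ rTensor U τVW
      ∘ₗ (homAssoc k i j (Y := W) αV αU).symm.toLinearMap ∘ₗ lTensor V τUW
      ∘ₗ (homAssoc k i j (Y := U) αV αW).toLinearMap ∘ₗ rTensor W τUV

/-- The twist `(α_Y^{-n} ⊗ id) ∘ c ∘ (α_X^n ⊗ id)` of a braiding `c`. -/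
def twistBraiding (n : ℤ) (αX : X ≃ₗ[k] X) (αY : Y ≃ₗ[k] Y) (c : X ⊗[k] Y →ₗ[k] Y ⊗[k] X) :
    X ⊗[k] Y →ₗ[k] Y ⊗[k] X :=
  rTensor X (αY ^ (-n)).toLinearMap ∘ₗ c ∘ₗ rTensor Y (αX ^ n).toLinearMap

/-- The automorphism of `(X ⊗ Y) ⊗ Z` carrying the ordinary Yang-Baxter equation to the
Hom-Yang-Baxter equation. -/
def gaugeLeft (i j : ℤ) (αX : X ≃ₗ[k] X) (αZ : Z ≃ₗ[k] Z) :
    (X ⊗[k] Y) ⊗[k] Z ≃ₗ[k] (X ⊗[k] Y) ⊗[k] Z :=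
  TensorProduct.congr (TensorProduct.congr (αX ^ (j - i)) (LinearEquiv.refl k Y)) (αZ ^ (i + 1))

/-- The counterpart of `gaugeLeft` on `X ⊗ (Y ⊗ Z)`. -/
def gaugeRight (i j : ℤ) (αX : X ≃ₗ[k] X) (αZ : Z ≃ₗ[k] Z) :
    X ⊗[k] (Y ⊗[k] Z) ≃ₗ[k] X ⊗[k] (Y ⊗[k] Z) :=
  TensorProduct.congr (αX ^ (j + 1)) (TensorProduct.congr (LinearEquiv.refl k Y) (αZ ^ (i - j)))

lemma homAssoc_gaugeLeft (i j : ℤ) (αX : X ≃ₗ[k] X) (αZ : Z ≃ₗ[k] Z) (t : (X ⊗[k] Y) ⊗[k] Z) :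
    homAssoc k i j αX αZ (gaugeLeft i j αX αZ t)
      = gaugeRight i j αX αZ (TensorProduct.assoc k X Y Z t) := by
  have exponentX : i + 1 + (j - i) = j + 1 := by ring
  have exponentZ : -j - 1 + (i + 1) = i - j := by ring
  have intertwines :
      (homAssoc k i j (Y := Y) αX αZ).toLinearMap ∘ₗ (gaugeLeft i j αX αZ).toLinearMap
        = (gaugeRight i j αX αZ).toLinearMap ∘ₗ (TensorProduct.assoc k X Y Z).toLinearMap := by
    refine TensorProduct.ext_threefold fun x y z => ?_
    change (αX ^ (i + 1)) ((αX ^ (j - i)) x) ⊗ₜ[k] (y ⊗ₜ[k] (αZ ^ (-j - 1)) ((αZ ^ (i + 1)) z))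
      = (αX ^ (j + 1)) x ⊗ₜ[k] (y ⊗ₜ[k] (αZ ^ (i - j)) z)
    rw [zpow_apply_zpow_apply, zpow_apply_zpow_apply, exponentX, exponentZ]
  exact LinearMap.congr_fun intertwines t

lemma homAssoc_symm_gaugeRight (i j : ℤ) (αX : X ≃ₗ[k] X) (αZ : Z ≃ₗ[k] Z)
    (t : X ⊗[k] (Y ⊗[k] Z)) :
    (homAssoc k i j αX αZ).symm (gaugeRight i j αX αZ t)
      = gaugeLeft i j αX αZ ((TensorProduct.assoc k X Y Z).symm t) := by
  rw [LinearEquiv.symm_apply_eq, homAssoc_gaugeLeft, LinearEquiv.apply_symm_apply]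

lemma rTensor_twistBraiding_gaugeLeft (i j : ℤ) (αX : X ≃ₗ[k] X) (αY : Y ≃ₗ[k] Y)
    (αZ : Z ≃ₗ[k] Z) (c : X ⊗[k] Y →ₗ[k] Y ⊗[k] X) (t : (X ⊗[k] Y) ⊗[k] Z) :
    rTensor Z (twistBraiding (i - j) αX αY c) (gaugeLeft i j αX αZ t)
      = gaugeLeft i j αY αZ (rTensor Z c t) := by
  have untwist : twistBraiding (i - j) αX αY c ∘ₗ rTensor Y (αX ^ (j - i)).toLinearMap
      = rTensor X (αY ^ (j - i)).toLinearMap ∘ₗ c := by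
    rw [twistBraiding, LinearMap.comp_assoc, LinearMap.comp_assoc, ← LinearMap.rTensor_comp,
      zpow_comp_zpow, sub_add_sub_cancel, sub_self, neg_sub]
    exact congrArg (_ ∘ₗ c ∘ₗ ·) (LinearMap.rTensor_id Y X)
  calc rTensor Z (twistBraiding (i - j) αX αY c) (gaugeLeft i j αX αZ t)
      = TensorProduct.map (twistBraiding (i - j) αX αY c ∘ₗ rTensor Y (αX ^ (j - i)).toLinearMap)
          (αZ ^ (i + 1)).toLinearMap t := LinearMap.rTensor_map ..
    _ = gaugeLeft i j αY αZ (rTensor Z c t) := by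
      rw [untwist]
      exact (LinearMap.map_rTensor ..).symm

lemma lTensor_twistBraiding_gaugeRight (i j : ℤ) (αX : X ≃ₗ[k] X) {αY : Y ≃ₗ[k] Y}
    {αZ : Z ≃ₗ[k] Z} {c : Y ⊗[k] Z →ₗ[k] Z ⊗[k] Y}
    (hc : ∀ t, c (TensorProduct.congr αY αZ t) = TensorProduct.congr αZ αY (c t))
    (t : X ⊗[k] (Y ⊗[k] Z)) :
    lTensor X (twistBraiding (i - j) αY αZ c) (gaugeRight i j αX αZ t)
      = gaugeRight i j αX αY (lTensor X c t) := by
  set n := i - j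
  have equivariant (s : Y ⊗[k] Z) :
      c (TensorProduct.map (αY ^ n).toLinearMap (αZ ^ n).toLinearMap s)
        = TensorProduct.map (αZ ^ n).toLinearMap (αY ^ n).toLinearMap (c s) := by
    have := apply_zpow_apply hc n s
    rwa [TensorProduct.congr_zpow, TensorProduct.congr_zpow] at this
  have untwist : twistBraiding n αY αZ c ∘ₗ lTensor Y (αZ ^ n).toLinearMap
      = lTensor Z (αY ^ n).toLinearMap ∘ₗ c := by
    refine LinearMap.ext fun s => ?_
    rw [twistBraiding, LinearMap.comp_assoc, LinearMap.comp_assoc, LinearMap.rTensor_comp_lTensor,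
      LinearMap.comp_apply, LinearMap.comp_apply, equivariant, LinearMap.rTensor_map,
      zpow_comp_zpow, neg_add_cancel]
    rfl
  calc lTensor X (twistBraiding n αY αZ c) (gaugeRight i j αX αZ t)
      = TensorProduct.map (αX ^ (j + 1)).toLinearMap
          (twistBraiding n αY αZ c ∘ₗ lTensor Y (αZ ^ n).toLinearMap) t := LinearMap.lTensor_map ..
    _ = gaugeRight i j αX αY (lTensor X c t) := by
      rw [untwist]
      exact (LinearMap.map_lTensor ..).symm

theorem YangBaxter.homYangBaxter_twistBraiding {αU : U ≃ₗ[k] U} {αV : V ≃ₗ[k] V} {αW : W ≃ₗ[k] W}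
    {cUV : U ⊗[k] V →ₗ[k] V ⊗[k] U} {cUW : U ⊗[k] W →ₗ[k] W ⊗[k] U}
    {cVW : V ⊗[k] W →ₗ[k] W ⊗[k] V} (hc : YangBaxter cUV cUW cVW)
    (hUV : ∀ t, cUV (TensorProduct.congr αU αV t) = TensorProduct.congr αV αU (cUV t))
    (hUW : ∀ t, cUW (TensorProduct.congr αU αW t) = TensorProduct.congr αW αU (cUW t))
    (hVW : ∀ t, cVW (TensorProduct.congr αV αW t) = TensorProduct.congr αW αV (cVW t))
    (i j : ℤ) :
    HomYangBaxter i j αU αV αW (twistBraiding (i - j) αU αV cUV)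
      (twistBraiding (i - j) αU αW cUW) (twistBraiding (i - j) αV αW cVW) := by
  refine LinearMap.ext fun t => ?_
  obtain ⟨s, rfl⟩ := (gaugeLeft i j αU αW).surjective t
  simp only [LinearMap.comp_apply, LinearEquiv.coe_coe, homAssoc_gaugeLeft,
    homAssoc_symm_gaugeRight, rTensor_twistBraiding_gaugeLeft,
    lTensor_twistBraiding_gaugeRight _ _ _ hUV, lTensor_twistBraiding_gaugeRight _ _ _ hUW,
    lTensor_twistBraiding_gaugeRight _ _ _ hVW]
  exact congrArg (gaugeRight i j αW αU) (LinearMap.congr_fun hc s)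

variable {αH : H ≃ₗ[k] H} {μ : H →ₗ[k] H →ₗ[k] H} {e : H} {Δ : H →ₗ[k] H ⊗[k] H}
  {ε : H →ₗ[k] k} {αX : X ≃ₗ[k] X} {act : X →ₗ[k] H →ₗ[k] X} {αY : Y ≃ₗ[k] Y}
  {ρ : Y →ₗ[k] Y ⊗[k] H}

lemma IsHomModule.ydTau_eq_twistBraiding (hX : IsHomModule k αH μ e αX act) (p i j : ℤ)
    (αY : Y ≃ₗ[k] Y) (ρ : Y →ₗ[k] Y ⊗[k] H) :
    ydTau k p i j αH αX αY act ρ = twistBraiding (i - j) αX αY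
      (braiding (untwistAct αX act) (untwistCoact p αH αY ρ)) := by
  ext x y
  change TensorProduct.map _ _ (TensorProduct.leftComm k X Y H (x ⊗ₜ ρ y))
    = rTensor X _ (braiding _ (untwistCoact p αH αY ρ) ((αX ^ (i - j)) x ⊗ₜ y))
  rw [braiding_tmul, untwistCoact_apply]
  induction ρ y with
  | zero => simp only [TensorProduct.tmul_zero, map_zero]
  | add s t hs ht => simp only [TensorProduct.tmul_add, map_add, hs, ht]
  | tmul y₀ y₁ =>
    simp only [TensorProduct.leftComm_tmul, TensorProduct.map_tmul, LinearMap.lTensor_tmul,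
      LinearMap.rTensor_tmul, LinearMap.comp_apply, LinearEquiv.coe_coe, TensorProduct.lift.tmul,
      untwistAct_apply, hX.zpow_act, zpow_apply_zpow_apply]
    ring_nf

lemma IsHomModule.braiding_untwist_congr (hX : IsHomModule k αH μ e αX act)
    (hY : IsHomComodule k αH Δ ε αY ρ) (p : ℤ) (t : X ⊗[k] Y) :
    braiding (untwistAct αX act) (untwistCoact p αH αY ρ) (TensorProduct.congr αX αY t)
      = TensorProduct.congr αY αX
        (braiding (untwistAct αX act) (untwistCoact p αH αY ρ) t) :=
  (LinearMap.congr_fun (map_comp_braiding hX.map_untwistAct (hY.untwistCoact_map p)) t).symm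

end Gauge

theorem yd_homYangBaxter_general
    {H U V W : Type*} [AddCommGroup H] [Module k H] [AddCommGroup U] [Module k U]
    [AddCommGroup V] [Module k V] [AddCommGroup W] [Module k W]
    {αH : H ≃ₗ[k] H} {μ : H →ₗ[k] H →ₗ[k] H} {e : H}
    {Δ : H →ₗ[k] H ⊗[k] H} {ε : H →ₗ[k] k} {S : H →ₗ[k] H}
    (hA : IsHomAlgebra k αH μ e) (hC : IsHomCoalgebra k αH Δ ε)
    (hSα : ∀ h, S (αH h) = αH (S h))
    (hS : ∀ h, TensorProduct.lift μ (lTensor H S (Δ h)) = ε h • e) (i j p : ℤ)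
    {αU : U ≃ₗ[k] U} {actU : U →ₗ[k] H →ₗ[k] U} (hU : IsHomModule k αH μ e αU actU)
    {αV : V ≃ₗ[k] V} {actV : V →ₗ[k] H →ₗ[k] V} {ρV : V →ₗ[k] V ⊗[k] H}
    (hV : IsYetterDrinfeld k αH μ e Δ ε S p αV actV ρV)
    {αW : W ≃ₗ[k] W} {ρW : W →ₗ[k] W ⊗[k] H} (hW : IsHomComodule k αH Δ ε αW ρW) :
    HomYangBaxter i j αU αV αW (ydTau k p i j αH αU αV actU ρV)
      (ydTau k p i j αH αU αW actU ρW) (ydTau k p i j αH αV αW actV ρW) := by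
  rw [hU.ydTau_eq_twistBraiding, hU.ydTau_eq_twistBraiding, hV.1.ydTau_eq_twistBraiding]
  have yangBaxter := (hV.isCrossed hA hC hSα hS).yangBaxter_braiding hU.untwistAct_untwistAct
    (hW.untwistCoact_coassoc hC p)
  exact yangBaxter.homYangBaxter_twistBraiding (hU.braiding_untwist_congr hV.2.1 p)
    (hU.braiding_untwist_congr hW p) (hV.1.braiding_untwist_congr hW p) i j

/-- the Hom-Yang-Baxter equation for the braiding `τ` on `p`-th
right-right Yetter-Drinfeld modules. -/
theorem yd_homYangBaxter
    {H U V W : Type*} [AddCommGroup H] [Module k H] [AddCommGroup U] [Module k U]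
    [AddCommGroup V] [Module k V] [AddCommGroup W] [Module k W]
    (αH : H ≃ₗ[k] H) (μ : H →ₗ[k] H →ₗ[k] H) (e : H)
    (Δ : H →ₗ[k] H ⊗[k] H) (ε : H →ₗ[k] k) (S : H →ₗ[k] H)
    (hH : IsHomHopf k αH μ e Δ ε S) (i j p : ℤ)
    (αU : U ≃ₗ[k] U) (actU : U →ₗ[k] H →ₗ[k] U) (ρU : U →ₗ[k] U ⊗[k] H)
    (hU : IsYetterDrinfeld k αH μ e Δ ε S p αU actU ρU)
    (αV : V ≃ₗ[k] V) (actV : V →ₗ[k] H →ₗ[k] V) (ρV : V →ₗ[k] V ⊗[k] H)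
    (hV : IsYetterDrinfeld k αH μ e Δ ε S p αV actV ρV)
    (αW : W ≃ₗ[k] W) (actW : W →ₗ[k] H →ₗ[k] W) (ρW : W →ₗ[k] W ⊗[k] H)
    (hW : IsYetterDrinfeld k αH μ e Δ ε S p αW actW ρW) :
    TensorProduct.map (LinearMap.id : W →ₗ[k] W) (ydTau k p i j αH αU αV actU ρV)
        ∘ₗ (homAssoc k i j (Y := U) αW αV).toLinearMap
        ∘ₗ TensorProduct.map (ydTau k p i j αH αU αW actU ρW) (LinearMap.id : V →ₗ[k] V)
        ∘ₗ (homAssoc k i j (Y := W) αU αV).symm.toLinearMap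
        ∘ₗ TensorProduct.map (LinearMap.id : U →ₗ[k] U) (ydTau k p i j αH αV αW actV ρW)
        ∘ₗ (homAssoc k i j (Y := V) αU αW).toLinearMap
      = (homAssoc k i j (Y := V) αW αU).toLinearMap
        ∘ₗ TensorProduct.map (ydTau k p i j αH αV αW actV ρW) (LinearMap.id : U →ₗ[k] U)
        ∘ₗ (homAssoc k i j (Y := W) αV αU).symm.toLinearMap
        ∘ₗ TensorProduct.map (LinearMap.id : V →ₗ[k] V) (ydTau k p i j αH αU αW actU ρW)
        ∘ₗ (homAssoc k i j (Y := U) αV αW).toLinearMap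
        ∘ₗ TensorProduct.map (ydTau k p i j αH αU αV actU ρV) (LinearMap.id : W →ₗ[k] W) := by
  exact yd_homYangBaxter_general k hH.1.1 hH.1.2.1 hH.2.1 hH.2.2.2 i j p hU.1 hV hW.2.1
end
end
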